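/- arXiv:2311.01748 — 3 statements merged into one kernel-verified Lean document; each statement's English description precedes it below -/
import Mathlib

section
/- (Variational lower estimate for α > 1.) Let α > 1 and z > 0, and let ρ, σ be n×n positive semidefinite complex matrices such that the support of ρ is contained in the support of σ (i.e., σv = 0 implies ρv = 0). Then for every positive semidefinite n×n complex matrix a: Q_{α,z}(ρ‖σ) ≥ α · Tr((a^{1/2} ρ^{α/z} a^{1/2})^{z/α}) − (α − 1) · Tr((a^{1/2} σ^{(α−1)/z} a^{1/2})^{z/(α−1)}). -/
open Matrix
open scoped ComplexOrder

/-- Real power of a positive semidefinite matrix via the spectral decomposition,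
applying `x ^ t` (real `rpow`, so with the convention `0 ^ t = 0` for `t ≠ 0`)
to the eigenvalues; returns `0` if the matrix is not Hermitian. -/
noncomputable def mpow {n : Type*} [Fintype n] [DecidableEq n]
    (A : Matrix n n ℂ) (t : ℝ) : Matrix n n ℂ :=
  if hA : A.IsHermitian then
    (hA.eigenvectorUnitary : Matrix n n ℂ) *
      Matrix.diagonal (fun i => ((hA.eigenvalues i ^ t : ℝ) : ℂ)) *
      star (hA.eigenvectorUnitary : Matrix n n ℂ)
  else 0


/-- The α-z-Rényi quantity `Q_{α,z}(ρ‖σ) = Tr((σ^((1−α)/2z) ρ^(α/z) σ^((1−α)/2z))^z)`. -/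
noncomputable def Qaz {n : Type*} [Fintype n] [DecidableEq n]
    (α z : ℝ) (ρ σ : Matrix n n ℂ) : ℝ :=
  ((mpow (mpow σ ((1 - α) / (2 * z)) * mpow ρ (α / z) * mpow σ ((1 - α) / (2 * z))) z).trace).re


lemma abel_aux (w c : ℕ → ℝ) (n : ℕ) (hw : ∀ i < n, w (i+1) ≤ w i)
    (hc : ∀ k ≤ n, 0 ≤ ∑ i ∈ Finset.range (k+1), c i) :
    w n * ∑ i ∈ Finset.range (n+1), c i ≤ ∑ i ∈ Finset.range (n+1), w i * c i := by
  induction n with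
  | zero => simp
  | succ n ih =>
    rw [Finset.sum_range_succ _ (n+1), Finset.sum_range_succ _ (n+1), mul_add]
    have h1 := ih (fun i hi => hw i (by omega)) (fun k hk => hc k (by omega))
    have h2 := mul_le_mul_of_nonneg_right (hw n (by omega)) (hc n (by omega))
    linarith

lemma maj_aux (r : ℝ) (hr : 0 < r) (h b : ℕ → ℝ) (n : ℕ) (h0 : ∀ i, 0 ≤ h i) (b0 : ∀ i, 0 ≤ b i)
    (hanti : ∀ i, i + 1 < n → h (i+1) ≤ h i)
    (hp : ∀ k ≤ n, ∏ i ∈ Finset.range k, h i ≤ ∏ i ∈ Finset.range k, b i) :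
    ∑ i ∈ Finset.range n, h i ^ r ≤ ∑ i ∈ Finset.range n, b i ^ r := by
  induction n with
  | zero => simp
  | succ n ih =>
    rcases (h0 n).eq_or_lt with hn | hn
    · rw [Finset.sum_range_succ, Finset.sum_range_succ, ← hn, Real.zero_rpow hr.ne']
      have := Real.rpow_nonneg (b0 n) r
      have := ih (fun i hi => hanti i (by omega)) (fun k hk => hp k (by omega))
      linarith
    · have hle : ∀ j ≤ n, h n ≤ h (n - j) := by
        intro j
        induction j with
        | zero => simp
        | succ j ihj =>
          intro hj
          have := hanti (n - (j+1)) (by omega)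
          rw [show n - (j+1) + 1 = n - j by omega] at this
          exact (ihj (by omega)).trans this
      have hpos : ∀ i ≤ n, 0 < h i := by
        intro i hi
        have := hle (n - i) (by omega)
        rw [show n - (n - i) = i by omega] at this
        linarith
      have hprod : ∀ k ≤ n + 1, 0 < ∏ i ∈ Finset.range k, h i := fun k hk =>
        Finset.prod_pos fun i hi => hpos i (by have := Finset.mem_range.1 hi; omega)
      have bpos : ∀ i ≤ n, 0 < b i := by
        intro i hi
        have h1 := (hprod (n+1) le_rfl).trans_le (hp (n+1) le_rfl)
        have := Finset.prod_ne_zero_iff.1 h1.ne' i (Finset.mem_range.2 (by omega))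
        exact lt_of_le_of_ne (b0 i) (Ne.symm this)
      have key := abel_aux (fun i => h i ^ r) (fun i => Real.log (b i) - Real.log (h i)) n
        (fun i hi => Real.rpow_le_rpow (h0 _) (hanti i (by omega)) hr.le) (by
          intro k hk
          rw [Finset.sum_sub_distrib, ← Real.log_prod, ← Real.log_prod]
          · exact sub_nonneg.2 (Real.log_le_log (hprod _ (by omega)) (hp _ (by omega)))
          · intro i hi
            exact (hpos i (by have := Finset.mem_range.1 hi; omega)).ne'
          · intro i hi
            exact (bpos i (by have := Finset.mem_range.1 hi; omega)).ne')
      have h3 : 0 ≤ ∑ i ∈ Finset.range (n+1), h i ^ r * (Real.log (b i) - Real.log (h i)) := by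
        refine le_trans (mul_nonneg (Real.rpow_nonneg (h0 n) r) ?_) key
        rw [Finset.sum_sub_distrib, ← Real.log_prod, ← Real.log_prod]
        · exact sub_nonneg.2 (Real.log_le_log (hprod _ (by omega)) (hp _ (by omega)))
        · intro i hi
          exact (hpos i (by have := Finset.mem_range.1 hi; omega)).ne'
        · intro i hi
          exact (bpos i (by have := Finset.mem_range.1 hi; omega)).ne'
      have h4 : ∀ i ∈ Finset.range (n+1),
          h i ^ r + r * (h i ^ r * (Real.log (b i) - Real.log (h i))) ≤ b i ^ r := by
        intro i hi
        have hi' : i ≤ n := by have := Finset.mem_range.1 hi; omega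
        have e1 : b i ^ r = h i ^ r * Real.exp (r * (Real.log (b i) - Real.log (h i))) := by
          rw [Real.rpow_def_of_pos (bpos i hi'), Real.rpow_def_of_pos (hpos i hi'), ← Real.exp_add]
          ring_nf
        rw [e1]
        have := mul_le_mul_of_nonneg_left
          (Real.add_one_le_exp (r * (Real.log (b i) - Real.log (h i)))) (Real.rpow_nonneg (h0 i) r)
        linarith
      have h5 := Finset.sum_le_sum h4
      rw [Finset.sum_add_distrib, ← Finset.mul_sum] at h5
      have := mul_nonneg hr.le h3
      linarith

/-- Interlacing in diagonal form. -/
lemma interlace {n k : ℕ} (hk : k ≤ n) (G : Matrix (Fin n) (Fin k) ℂ) (hG : Gᴴ * G = 1)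
    (d : Fin n → ℝ) (μ : Fin k → ℝ) (hd : Antitone d) (hμ : Antitone μ)
    (h : Gᴴ * diagonal (fun i => (d i : ℂ)) * G = diagonal (fun i => (μ i : ℂ))) (j : Fin k) :
    μ j ≤ d (Fin.castLE hk j) := by
  -- a vector supported on indices ≤ j
  let E : (Fin (j+1) → ℂ) →ₗ[ℂ] (Fin k → ℂ) :=
    { toFun := fun c i => if hi : i ≤ j then c ⟨i, Nat.lt_succ_of_le hi⟩ else 0
      map_add' := by intro x y; ext i; by_cases hi : i ≤ j <;> simp [hi]
      map_smul' := by intro x y; ext i; by_cases hi : i ≤ j <;> simp [hi] }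
  let R : (Fin n → ℂ) →ₗ[ℂ] (Fin j → ℂ) :=
    LinearMap.funLeft ℂ ℂ (fun l : Fin j => (⟨l, by omega⟩ : Fin n))
  let L := R ∘ₗ (G.mulVecLin) ∘ₗ E
  have hL : LinearMap.ker L ≠ ⊥ := LinearMap.ker_ne_bot_of_finrank_lt (by simp)
  obtain ⟨c, hc, hc0⟩ := (Submodule.ne_bot_iff _).1 hL
  set v := E c with hv
  set y := G *ᵥ v with hy
  have hv0 : ∀ i : Fin k, j < i → v i = 0 := by
    intro i hi
    have : ¬ (i ≤ j) := not_le.2 hi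
    simp [hv, E, this]
  have hvne : v ≠ 0 := by
    intro h0
    apply hc0
    ext i
    have := congrFun h0 ⟨i, by omega⟩
    have hi : (⟨i, by omega⟩ : Fin k) ≤ j := Nat.le_of_lt_succ i.2
    simpa [hv, E, hi] using this
  have hy0 : ∀ l : Fin n, (l:ℕ) < j → y l = 0 := by
    intro l hl
    have h1 : L c = 0 := hc
    have := congrFun h1 ⟨l, hl⟩
    simpa [L, R, LinearMap.funLeft_apply] using this
  have n1 : star y ⬝ᵥ y = star v ⬝ᵥ v := by
    rw [hy, star_mulVec, ← dotProduct_mulVec, mulVec_mulVec, hG, one_mulVec]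
  have n2 : star y ⬝ᵥ (diagonal (fun i => (d i : ℂ)) *ᵥ y)
      = star v ⬝ᵥ (diagonal (fun i => (μ i : ℂ)) *ᵥ v) := by
    rw [hy, star_mulVec, ← dotProduct_mulVec, mulVec_mulVec, mulVec_mulVec, ← h, Matrix.mul_assoc]
  have m1 : ∑ i, ‖y i‖^2 = ∑ i, ‖v i‖^2 := by
    have e : ∀ {m : ℕ} (u : Fin m → ℂ), star u ⬝ᵥ u = ((∑ i, ‖u i‖^2 : ℝ) : ℂ) := by
      intro m u
      simp [dotProduct, ← Complex.conj_mul']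
    rw [e, e] at n1
    exact_mod_cast n1
  have m2 : ∑ i, d i * ‖y i‖^2 = ∑ i, μ i * ‖v i‖^2 := by
    have e : ∀ {m : ℕ} (u : Fin m → ℂ) (f : Fin m → ℝ),
        star u ⬝ᵥ (diagonal (fun i => (f i : ℂ)) *ᵥ u) = ((∑ i, f i * ‖u i‖^2 : ℝ) : ℂ) := by
      intro m u f
      simp only [dotProduct, mulVec_diagonal, Complex.ofReal_sum, Complex.ofReal_mul,
        Complex.ofReal_pow, ← Complex.conj_mul', Pi.star_apply, RCLike.star_def]
      exact Finset.sum_congr rfl fun i _ => by ring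
    rw [e, e] at n2
    exact_mod_cast n2
  have m3 : ∑ i, d i * ‖y i‖^2 ≤ d (Fin.castLE hk j) * ∑ i, ‖y i‖^2 := by
    rw [Finset.mul_sum]
    refine Finset.sum_le_sum fun i _ => ?_
    by_cases hi : (i:ℕ) < j
    · simp [hy0 i hi]
    · exact mul_le_mul_of_nonneg_right (hd (by rw [Fin.le_def]; simpa using hi)) (by positivity)
  have m4 : μ j * ∑ i, ‖v i‖^2 ≤ ∑ i, μ i * ‖v i‖^2 := by
    rw [Finset.mul_sum]
    refine Finset.sum_le_sum fun i _ => ?_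
    by_cases hi : j < i
    · simp [hv0 i hi]
    · exact mul_le_mul_of_nonneg_right (hμ (not_lt.1 hi)) (by positivity)
  have m5 : 0 < ∑ i, ‖v i‖^2 := by
    obtain ⟨i, hi⟩ := Function.ne_iff.1 hvne
    exact Finset.sum_pos' (fun i _ => by positivity) ⟨i, Finset.mem_univ _, by
      have : 0 < ‖v i‖ := norm_pos_iff.2 hi
      positivity⟩
  rw [m1] at m3
  exact le_of_mul_le_mul_right (by linarith) m5

/-- Sorted spectral decomposition. -/
lemma sorted_spec {n : ℕ} (H : Matrix (Fin n) (Fin n) ℂ) (hH : H.PosSemidef) :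
    ∃ (V : Matrix (Fin n) (Fin n) ℂ) (d : Fin n → ℝ), Vᴴ * V = 1 ∧ Antitone d ∧ (∀ i, 0 ≤ d i) ∧
      H = V * diagonal (fun i => (d i : ℂ)) * Vᴴ ∧
      ∀ t : ℝ, ((mpow H t).trace).re = ∑ i, d i ^ t := by
  have hA := hH.isHermitian
  let s : Equiv.Perm (Fin n) := Tuple.sort (fun i => - hA.eigenvalues i)
  have hs : Monotone ((fun i => - hA.eigenvalues i) ∘ s) := Tuple.monotone_sort _
  let U : Matrix (Fin n) (Fin n) ℂ := hA.eigenvectorUnitary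
  have hU : Uᴴ * U = 1 := Unitary.coe_star_mul_self hA.eigenvectorUnitary
  refine ⟨U.submatrix id s, fun i => hA.eigenvalues (s i), ?_, ?_, ?_, ?_, ?_⟩
  · rw [conjTranspose_submatrix, ← submatrix_mul _ _ s id s Function.bijective_id, hU]
    simp
  · intro i j hij
    have := hs hij
    simpa using this
  · exact fun i => hH.eigenvalues_nonneg _
  · have e : diagonal (fun i => ((hA.eigenvalues (s i) : ℝ) : ℂ))
        = (diagonal (fun i => ((hA.eigenvalues i : ℝ) : ℂ))).submatrix s s := by
      rw [submatrix_diagonal_equiv]; rfl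
    rw [e, conjTranspose_submatrix, submatrix_mul_equiv, submatrix_mul_equiv, submatrix_id_id]
    conv_lhs => rw [hA.spectral_theorem, Unitary.conjStarAlgAut_apply]
    rfl
  · intro t
    rw [mpow, dif_pos hA, trace_mul_comm, ← Matrix.mul_assoc]
    rw [show star (hA.eigenvectorUnitary : Matrix (Fin n) (Fin n) ℂ) * (hA.eigenvectorUnitary : Matrix (Fin n) (Fin n) ℂ) = 1 from hU, Matrix.one_mul, trace_diagonal]
    rw [← Complex.ofReal_sum, Complex.ofReal_re]
    exact (Equiv.sum_comp s (fun i => hA.eigenvalues i ^ t)).symm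

lemma det_bound_iso {n k : ℕ} (hk : k ≤ n) (V : Matrix (Fin n) (Fin n) ℂ) (d : Fin n → ℝ)
    (hV : Vᴴ * V = 1) (hd : Antitone d) (hd0 : ∀ i, 0 ≤ d i)
    (W : Matrix (Fin n) (Fin k) ℂ) (hW : Wᴴ * W = 1) :
    ((Wᴴ * (V * diagonal (fun i => (d i : ℂ)) * Vᴴ) * W).det).re
      ≤ ∏ i : Fin k, d (Fin.castLE hk i) := by
  have hD : (diagonal (fun i => (d i : ℂ))).PosSemidef :=
    PosSemidef.diagonal (fun i => by simpa using hd0 i)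
  have hK : (Wᴴ * (V * diagonal (fun i => (d i : ℂ)) * Vᴴ) * W).PosSemidef :=
    (hD.mul_mul_conjTranspose_same V).conjTranspose_mul_mul_same W
  obtain ⟨Q, μ, hQ, hμ, hμ0, hKe, -⟩ := sorted_spec _ hK
  have hQ' : Q * Qᴴ = 1 := mul_eq_one_comm.1 hQ
  have hV' : V * Vᴴ = 1 := mul_eq_one_comm.1 hV
  have hle := interlace hk (Vᴴ * W * Q) (by
      simp only [conjTranspose_mul, conjTranspose_conjTranspose]
      calc Qᴴ * (Wᴴ * V) * (Vᴴ * W * Q) = Qᴴ * (Wᴴ * (V * Vᴴ) * W) * Q := by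
            simp only [Matrix.mul_assoc]
        _ = 1 := by rw [hV', Matrix.mul_one, hW, Matrix.mul_one, hQ]) d μ hd hμ (by
      simp only [conjTranspose_mul, conjTranspose_conjTranspose]
      calc Qᴴ * (Wᴴ * V) * diagonal (fun i => (d i : ℂ)) * (Vᴴ * W * Q)
          = Qᴴ * (Wᴴ * (V * diagonal (fun i => (d i : ℂ)) * Vᴴ) * W) * Q := by
            simp only [Matrix.mul_assoc]
        _ = (Qᴴ * Q) * diagonal (fun i => (μ i : ℂ)) * (Qᴴ * Q) := by
            rw [hKe]; simp only [Matrix.mul_assoc]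
        _ = _ := by rw [hQ, Matrix.mul_one, Matrix.one_mul])
  rw [hKe, det_mul_right_comm, hQ', Matrix.one_mul, det_diagonal, ← Complex.ofReal_prod, Complex.ofReal_re]
  exact Finset.prod_le_prod (fun i _ => hμ0 i) (fun i _ => hle i)

lemma det_bound {n k : ℕ} (hk : k ≤ n) (V : Matrix (Fin n) (Fin n) ℂ) (d : Fin n → ℝ)
    (hV : Vᴴ * V = 1) (hd : Antitone d) (hd0 : ∀ i, 0 ≤ d i)
    (M : Matrix (Fin n) (Fin k) ℂ) :
    ((Mᴴ * (V * diagonal (fun i => (d i : ℂ)) * Vᴴ) * M).det).re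
      ≤ ((Mᴴ * M).det).re * ∏ i : Fin k, d (Fin.castLE hk i) := by
  by_cases h0 : (Mᴴ * M).det = 0
  · obtain ⟨v, hv, hv0⟩ := Matrix.exists_mulVec_eq_zero_iff.2 h0
    have hMv : M *ᵥ v = 0 := by
      rw [← dotProduct_star_self_eq_zero, star_mulVec, ← dotProduct_mulVec, mulVec_mulVec, hv0,
        dotProduct_zero]
    have : (Mᴴ * (V * diagonal (fun i => (d i : ℂ)) * Vᴴ) * M).det = 0 := by
      apply Matrix.exists_mulVec_eq_zero_iff.1
      exact ⟨v, hv, by rw [← mulVec_mulVec, hMv, mulVec_zero]⟩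
    rw [this, h0]; simp
  · obtain ⟨Q, μ, hQ, hμ, hμ0, hKe, -⟩ := sorted_spec _ (posSemidef_conjTranspose_mul_self M)
    have hQ' : Q * Qᴴ = 1 := mul_eq_one_comm.1 hQ
    have hdet : (Mᴴ * M).det = ((∏ i, μ i : ℝ) : ℂ) := by
      rw [hKe, det_mul_right_comm, hQ', Matrix.one_mul, det_diagonal, ← Complex.ofReal_prod]
    have hpos : ∀ i, 0 < μ i := by
      intro i
      rw [hdet] at h0
      have h1 : ∏ i, μ i ≠ 0 := by exact_mod_cast h0
      exact lt_of_le_of_ne (hμ0 i) (Finset.prod_ne_zero_iff.1 h1 i (Finset.mem_univ _)).symm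
    let T : Matrix (Fin k) (Fin k) ℂ := Q * diagonal (fun i => (((Real.sqrt (μ i))⁻¹ : ℝ) : ℂ))
    have hT : Tᴴ * (Mᴴ * M) * T = 1 := by
      have hs : (diagonal (fun i => (((Real.sqrt (μ i))⁻¹ : ℝ) : ℂ)))ᴴ
        = diagonal (fun i => (((Real.sqrt (μ i))⁻¹ : ℝ) : ℂ)) := by
        rw [diagonal_conjTranspose]; congr 1; ext i; simp
      rw [hKe]
      simp only [T, conjTranspose_mul, hs]
      calc _ = diagonal (fun i => (((Real.sqrt (μ i))⁻¹ : ℝ) : ℂ)) * (Qᴴ * Q) * diagonal (fun i => (μ i : ℂ))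
            * (Qᴴ * Q) * diagonal (fun i => (((Real.sqrt (μ i))⁻¹ : ℝ) : ℂ)) := by
            simp only [Matrix.mul_assoc]
        _ = 1 := by
            rw [hQ, Matrix.mul_one, Matrix.mul_one, diagonal_mul_diagonal, diagonal_mul_diagonal,
              ← diagonal_one]
            congr 1
            ext i
            have h1 := Real.sqrt_pos.2 (hpos i)
            have h2 := Real.mul_self_sqrt (hpos i).le
            norm_cast
            field_simp
            nlinarith
    have hb := det_bound_iso hk V d hV hd hd0 (M * T) (by
      rw [conjTranspose_mul, ← hT]; simp only [Matrix.mul_assoc])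
    have e1 : (M * T)ᴴ * (V * diagonal (fun i => (d i : ℂ)) * Vᴴ) * (M * T)
        = Tᴴ * (Mᴴ * (V * diagonal (fun i => (d i : ℂ)) * Vᴴ) * M) * T := by
      rw [conjTranspose_mul]; simp only [Matrix.mul_assoc]
    rw [e1, det_mul, det_mul] at hb
    have hdT := congrArg det hT
    rw [det_mul, det_mul, det_one] at hdT
    have hre : (Mᴴ * (V * diagonal (fun i => (d i : ℂ)) * Vᴴ) * M).det
        = (((∏ i, μ i : ℝ)) : ℂ) * (Tᴴ.det * (Mᴴ * (V * diagonal (fun i => (d i : ℂ)) * Vᴴ) * M).det * T.det) := by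
      rw [← hdet]; linear_combination -(Mᴴ * (V * diagonal (fun i => (d i : ℂ)) * Vᴴ) * M).det * hdT
    rw [hre, Complex.re_ofReal_mul, hdet, Complex.ofReal_re]
    exact mul_le_mul_of_nonneg_left hb (Finset.prod_nonneg fun i _ => hμ0 i)

/-- Trace inequality for products of matrices (Horn). -/
lemma horn_trace {n : ℕ} (X Y : Matrix (Fin n) (Fin n) ℂ) (α z : ℝ) (hα : 1 < α) (hz : 0 < z) :
    α * ((mpow ((X * Y)ᴴ * (X * Y)) (z / α)).trace).re
      ≤ ((mpow (Xᴴ * X) z).trace).re + (α - 1) * ((mpow (Yᴴ * Y) (z / (α - 1))).trace).re := by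
  obtain ⟨U, h, hU, hh, hh0, hHe, hHt⟩ := sorted_spec _ (posSemidef_conjTranspose_mul_self (X * Y))
  obtain ⟨V, x, hV, hx, hx0, hXe, hXt⟩ := sorted_spec _ (posSemidef_conjTranspose_mul_self X)
  obtain ⟨W, y, hW, hy, hy0, hYe, hYt⟩ := sorted_spec _ (posSemidef_conjTranspose_mul_self Y)
  rw [hHt, hXt, hYt]
  have hprod : ∀ k (hk : k ≤ n), ∏ i : Fin k, h (Fin.castLE hk i)
      ≤ ∏ i : Fin k, (x (Fin.castLE hk i) * y (Fin.castLE hk i)) := by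
    intro k hk
    let N : Matrix (Fin n) (Fin k) ℂ := U.submatrix id (Fin.castLE hk)
    have hUN : Uᴴ * N = (1 : Matrix (Fin n) (Fin n) ℂ).submatrix id (Fin.castLE hk) := by
      rw [← hU, submatrix_mul _ _ id id _ Function.bijective_id]; rfl
    have hNU : Nᴴ * U = (1 : Matrix (Fin n) (Fin n) ℂ).submatrix (Fin.castLE hk) id := by
      rw [← hU, submatrix_mul _ _ _ id id Function.bijective_id]; rfl
    have hNN : Nᴴ * N = 1 := by
      have : Nᴴ * N = (Uᴴ * U).submatrix (Fin.castLE hk) (Fin.castLE hk) := by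
        rw [submatrix_mul _ _ _ id _ Function.bijective_id]; rfl
      rw [this, hU, submatrix_one _ (Fin.castLE_injective hk)]
    have b1 := det_bound hk W y hW hy hy0 N
    have b2 := det_bound hk V x hV hx hx0 (Y * N)
    rw [← hYe, hNN, det_one, Complex.one_re, one_mul] at b1
    rw [← hXe] at b2
    have e1 : (Y * N)ᴴ * (Y * N) = Nᴴ * (Yᴴ * Y) * N := by
      rw [conjTranspose_mul]; simp only [Matrix.mul_assoc]
    have e2 : (Y * N)ᴴ * (Xᴴ * X) * (Y * N) = Nᴴ * ((X * Y)ᴴ * (X * Y)) * N := by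
      rw [conjTranspose_mul, conjTranspose_mul]; simp only [Matrix.mul_assoc]
    have e3 : Nᴴ * ((X * Y)ᴴ * (X * Y)) * N = diagonal (fun i => (h (Fin.castLE hk i) : ℂ)) := by
      rw [hHe]
      calc _ = (Nᴴ * U) * diagonal (fun i => (h i : ℂ)) * (Uᴴ * N) := by
            simp only [Matrix.mul_assoc]
        _ = _ := by
          rw [hUN, hNU]
          ext i j
          by_cases hij : i = j <;> simp [Matrix.mul_apply, diagonal_apply, one_apply, hij]
    rw [e1, e2, e3, det_diagonal, ← Complex.ofReal_prod, Complex.ofReal_re] at b2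
    rw [Finset.prod_mul_distrib, mul_comm]
    exact b2.trans (mul_le_mul_of_nonneg_right b1 (Finset.prod_nonneg fun i _ => hx0 _))
  have hα0 : 0 < α := by linarith
  have hmaj : ∑ i, h i ^ (z / α) ≤ ∑ i, (x i * y i) ^ (z / α) := by
    let h' : ℕ → ℝ := fun i => if hi : i < n then h ⟨i, hi⟩ else 0
    let b' : ℕ → ℝ := fun i => if hi : i < n then x ⟨i, hi⟩ * y ⟨i, hi⟩ else 0
    have := maj_aux (z / α) (by positivity) h' b' n
      (by intro i; by_cases hi : i < n <;> simp [h', hi, hh0])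
      (by intro i; by_cases hi : i < n <;> simp [b', hi, mul_nonneg (hx0 _) (hy0 _)])
      (by
        intro i hi
        have hi' : i < n := by omega
        simp only [h', hi, hi', dif_pos]
        exact hh (by simp [Fin.le_def]))
      (by
        intro k hk
        have := hprod k hk
        rw [Finset.prod_range, Finset.prod_range]
        convert this using 2 with i _ i _
        · have : (i:ℕ) < n := by omega
          simp only [h', this, dif_pos]; rfl
        · have : (i:ℕ) < n := by omega
          simp only [b', this, dif_pos]; rfl)
    rw [Finset.sum_range, Finset.sum_range] at this
    simpa [h', b'] using this
  have hyoung : ∀ i, α * (x i * y i) ^ (z / α) ≤ x i ^ z + (α - 1) * y i ^ (z / (α - 1)) := by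
    intro i
    have hα1 : 0 < α - 1 := by linarith
    have := Real.geom_mean_le_arith_mean2_weighted (w₁ := 1 / α) (w₂ := (α - 1) / α)
      (p₁ := x i ^ z) (p₂ := y i ^ (z / (α - 1))) (by positivity) (by positivity)
      (Real.rpow_nonneg (hx0 i) _) (Real.rpow_nonneg (hy0 i) _) (by field_simp; ring)
    rw [← Real.rpow_mul (hx0 i), ← Real.rpow_mul (hy0 i)] at this
    rw [show z / (α - 1) * ((α - 1) / α) = z / α by field_simp,
      show z * (1 / α) = z / α by field_simp, ← Real.mul_rpow (hx0 i) (hy0 i)] at this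
    have h2 := mul_le_mul_of_nonneg_left this hα0.le
    refine h2.trans (le_of_eq ?_)
    field_simp
  calc α * ∑ i, h i ^ (z / α) ≤ α * ∑ i, (x i * y i) ^ (z / α) :=
        mul_le_mul_of_nonneg_left hmaj hα0.le
    _ = ∑ i, α * (x i * y i) ^ (z / α) := Finset.mul_sum ..
    _ ≤ ∑ i, (x i ^ z + (α - 1) * y i ^ (z / (α - 1))) := Finset.sum_le_sum fun i _ => hyoung i
    _ = _ := by rw [Finset.sum_add_distrib, Finset.mul_sum]

lemma mpow_herm {n : ℕ} (A : Matrix (Fin n) (Fin n) ℂ) (t : ℝ) : (mpow A t)ᴴ = mpow A t := by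
  unfold mpow
  split_ifs with hA
  · simp only [conjTranspose_mul, star_eq_conjTranspose, conjTranspose_conjTranspose,
      diagonal_conjTranspose, Matrix.mul_assoc]
    congr 3
    ext i; simp
  · simp

lemma mpow_mul {n : ℕ} (A : Matrix (Fin n) (Fin n) ℂ) (hA : A.IsHermitian) (s t : ℝ) :
    mpow A s * mpow A t = (hA.eigenvectorUnitary : Matrix (Fin n) (Fin n) ℂ) *
      diagonal (fun i => ((hA.eigenvalues i ^ s * hA.eigenvalues i ^ t : ℝ) : ℂ)) *
      star (hA.eigenvectorUnitary : Matrix (Fin n) (Fin n) ℂ) := by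
  have hU : star (hA.eigenvectorUnitary : Matrix (Fin n) (Fin n) ℂ) *
    (hA.eigenvectorUnitary : Matrix (Fin n) (Fin n) ℂ) = 1 :=
    Unitary.coe_star_mul_self hA.eigenvectorUnitary
  rw [mpow, mpow, dif_pos hA, dif_pos hA]
  generalize (hA.eigenvectorUnitary : Matrix (Fin n) (Fin n) ℂ) = U at *
  calc _ = U * diagonal (fun i => ((hA.eigenvalues i ^ s : ℝ) : ℂ)) * (star U * U) *
        diagonal (fun i => ((hA.eigenvalues i ^ t : ℝ) : ℂ)) * star U := by
        simp only [Matrix.mul_assoc]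
    _ = _ := by
      rw [hU, Matrix.mul_one, Matrix.mul_assoc U, diagonal_mul_diagonal]
      simp only [Complex.ofReal_mul]

lemma mpow_half {n : ℕ} (A : Matrix (Fin n) (Fin n) ℂ) (hA : A.PosSemidef) (s t : ℝ) (hs : s ≠ 0)
    (hst : s + s = t) : mpow A s * mpow A s = mpow A t := by
  rw [mpow_mul A hA.isHermitian, mpow, dif_pos hA.isHermitian]
  congr 4
  ext i
  rw [← hst, Real.rpow_add' (hA.eigenvalues_nonneg i)]
  intro h; apply hs; linarith

lemma mpow_supp {n : ℕ} (ρ σ : Matrix (Fin n) (Fin n) ℂ) (hρ : ρ.PosSemidef) (hσ : σ.PosSemidef)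
    (hsupp : ∀ v : Fin n → ℂ, σ *ᵥ v = 0 → ρ *ᵥ v = 0) (s t : ℝ) (hs : s ≠ 0) (ht : t ≠ 0) :
    mpow ρ t * (mpow σ (-s) * mpow σ s) = mpow ρ t := by
  set N := 1 - mpow σ (-s) * mpow σ s with hN
  have h1 : σ * N = 0 := by
    have hA := hσ.isHermitian
    rw [hN, mpow_mul σ hA, Matrix.mul_sub, Matrix.mul_one, sub_eq_zero]
    have hU : star (hA.eigenvectorUnitary : Matrix (Fin n) (Fin n) ℂ) *
      (hA.eigenvectorUnitary : Matrix (Fin n) (Fin n) ℂ) = 1 :=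
      Unitary.coe_star_mul_self hA.eigenvectorUnitary
    have hsp := hA.spectral_theorem
    rw [Unitary.conjStarAlgAut_apply] at hsp
    have hev : ∀ i, hA.eigenvalues i * (hA.eigenvalues i ^ (-s) * hA.eigenvalues i ^ s)
        = hA.eigenvalues i := by
      intro i
      rcases (hσ.eigenvalues_nonneg i).eq_or_lt with h | h
      · rw [← h]; simp
      · rw [← Real.rpow_add h]; simp
    generalize hA.eigenvalues = e at *
    generalize (hA.eigenvectorUnitary : Matrix (Fin n) (Fin n) ℂ) = U at *
    rw [hsp]
    symm
    calc _ = U * diagonal (RCLike.ofReal ∘ e) * (star U * U) *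
          diagonal (fun i => ((e i ^ (-s) * e i ^ s : ℝ) : ℂ)) * star U := by
          simp only [Matrix.mul_assoc]
      _ = _ := by
        rw [hU, Matrix.mul_one, Matrix.mul_assoc U, diagonal_mul_diagonal]
        congr 4
        ext i
        have := hev i
        simp only [Function.comp_apply, Complex.coe_algebraMap, RCLike.ofReal_eq_complex_ofReal] 
        exact_mod_cast this
  have h2 : ρ * N = 0 := by
    ext i j
    have h3 : σ *ᵥ (fun l => N l j) = 0 := by
      ext l; exact congrFun (congrFun h1 l) j
    exact congrFun (hsupp _ h3) i
  have h4 : mpow ρ t * N = 0 := by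
    have hA := hρ.isHermitian
    have hU : star (hA.eigenvectorUnitary : Matrix (Fin n) (Fin n) ℂ) *
      (hA.eigenvectorUnitary : Matrix (Fin n) (Fin n) ℂ) = 1 :=
      Unitary.coe_star_mul_self hA.eigenvectorUnitary
    have hsp := hA.spectral_theorem
    rw [Unitary.conjStarAlgAut_apply] at hsp
    rw [mpow, dif_pos hA]
    generalize hA.eigenvalues = e at *
    generalize (hA.eigenvectorUnitary : Matrix (Fin n) (Fin n) ℂ) = U at *
    have h5 : diagonal (RCLike.ofReal ∘ e) * (star U * N) = 0 := by
      have : star U * (ρ * N) = 0 := by rw [h2, Matrix.mul_zero]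
      rw [hsp] at this
      rw [← this]
      simp only [← Matrix.mul_assoc, hU, Matrix.one_mul]
    have h6 : diagonal (fun i => ((e i ^ t : ℝ) : ℂ)) * (star U * N) = 0 := by
      ext i j
      have h7 := congrFun (congrFun h5 i) j
      rw [diagonal_mul] at h7 ⊢
      rcases mul_eq_zero.1 h7 with h | h
      · have : e i = 0 := by simpa using h
        simp [this, Real.zero_rpow ht]
      · rw [h]; simp
    rw [Matrix.mul_assoc, Matrix.mul_assoc, h6, Matrix.mul_zero]
  rw [hN, Matrix.mul_sub, Matrix.mul_one, sub_eq_zero] at h4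
  exact h4.symm

/-- Variational lower estimate for `α > 1`, `z > 0`: if `supp ρ ⊆ supp σ`, then for
every positive semidefinite `a`,
`Q_{α,z}(ρ‖σ) ≥ α Tr((a^{1/2} ρ^{α/z} a^{1/2})^{z/α})
              − (α−1) Tr((a^{1/2} σ^{(α−1)/z} a^{1/2})^{z/(α−1)})`. -/
theorem Qaz_variational_ge (n : ℕ) (α z : ℝ) (hα : 1 < α) (hz : 0 < z)
    (ρ σ : Matrix (Fin n) (Fin n) ℂ) (hρ : ρ.PosSemidef) (hσ : σ.PosSemidef)
    (hsupp : ∀ v : Fin n → ℂ, σ *ᵥ v = 0 → ρ *ᵥ v = 0)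
    (a : Matrix (Fin n) (Fin n) ℂ) (ha : a.PosSemidef) :
    α * ((mpow (mpow a (1 / 2) * mpow ρ (α / z) * mpow a (1 / 2)) (z / α)).trace).re
      - (α - 1) * ((mpow (mpow a (1 / 2) * mpow σ ((α - 1) / z) * mpow a (1 / 2))
          (z / (α - 1))).trace).re
      ≤ Qaz α z ρ σ := by
  have hα1 : 0 < α - 1 := by linarith
  have hα0 : 0 < α := by linarith
  have key := horn_trace (mpow ρ (α / (2 * z)) * mpow σ (-((α - 1) / (2 * z))))
    (mpow σ ((α - 1) / (2 * z)) * mpow a (1 / 2)) α z hα hz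
  have hs : (α - 1) / (2 * z) ≠ 0 := by positivity
  have ht : α / (2 * z) ≠ 0 := by positivity
  have e0 : mpow ρ (α / (2 * z)) * mpow σ (-((α - 1) / (2 * z))) *
      (mpow σ ((α - 1) / (2 * z)) * mpow a (1 / 2)) = mpow ρ (α / (2 * z)) * mpow a (1 / 2) := by
    rw [← Matrix.mul_assoc, Matrix.mul_assoc (mpow ρ _), mpow_supp ρ σ hρ hσ hsupp _ _ hs ht]
  have r2 := mpow_half ρ hρ (α / (2 * z)) (α / z) ht (by field_simp; ring)
  have s2 := mpow_half σ hσ ((α - 1) / (2 * z)) ((α - 1) / z) hs (by field_simp; ring)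
  rw [e0] at key
  simp only [conjTranspose_mul, mpow_herm, Matrix.mul_assoc] at key
  simp only [← Matrix.mul_assoc (mpow ρ (α / (2 * z))) (mpow ρ (α / (2 * z))),
    ← Matrix.mul_assoc (mpow σ ((α - 1) / (2 * z))) (mpow σ ((α - 1) / (2 * z))), r2, s2] at key
  rw [Qaz, show (1 - α) / (2 * z) = -((α - 1) / (2 * z)) by ring]
  simp only [Matrix.mul_assoc]
  linarith
end

section
/- (Strict positivity for α > 1.) Let α > 1 and z > 0, and let ρ, σ be nonzero n×n positive semidefinite complex matrices such that the support of ρ is contained in the support of σ (i.e., σv = 0 implies ρv = 0). Then Q_{α,z}(ρ‖σ) ≥ (Tr ρ)^α · (Tr σ)^{1−α}. Moreover, if (Tr σ) · ρ = (Tr ρ) · σ then equality holds, and if z ≥ α/2 and equality holds then (Tr σ) · ρ = (Tr ρ) · σ. -/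
open Matrix
open scoped ComplexOrder

theorem mpow_def' {n : Type*} [Fintype n] [DecidableEq n] {A : Matrix n n ℂ} (hA : A.IsHermitian)
    (t : ℝ) : mpow A t = (hA.eigenvectorUnitary : Matrix n n ℂ) *
      Matrix.diagonal (fun i => ((hA.eigenvalues i ^ t : ℝ) : ℂ)) *
      star (hA.eigenvectorUnitary : Matrix n n ℂ) := by
  rw [mpow, dif_pos hA]

theorem mpow_eq_cfc {n : Type*} [Fintype n] [DecidableEq n] {A : Matrix n n ℂ} (hA : A.IsHermitian)
    (t : ℝ) : mpow A t = cfc (fun x : ℝ => x ^ t) A := by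
  rw [mpow_def' hA, hA.cfc_eq, Matrix.IsHermitian.cfc, Unitary.conjStarAlgAut_apply]
  rfl

theorem spec_eq {n : Type*} [Fintype n] [DecidableEq n] {A : Matrix n n ℂ} (hA : A.IsHermitian) :
    A = (hA.eigenvectorUnitary : Matrix n n ℂ) *
      Matrix.diagonal (fun i => ((hA.eigenvalues i : ℝ) : ℂ)) *
      star (hA.eigenvectorUnitary : Matrix n n ℂ) := by
  have := hA.spectral_theorem
  rw [Unitary.conjStarAlgAut_apply] at this
  exact this

theorem mpow_one' {n : Type*} [Fintype n] [DecidableEq n] {A : Matrix n n ℂ} (hA : A.IsHermitian) :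
    mpow A 1 = A := by
  conv_rhs => rw [spec_eq hA]
  rw [mpow_def' hA]
  simp

theorem mpow_herm_s16 {n : Type*} [Fintype n] [DecidableEq n] {A : Matrix n n ℂ} (hA : A.IsHermitian)
    (t : ℝ) : (mpow A t).IsHermitian := by
  rw [mpow_eq_cfc hA]
  exact cfc_predicate _ A

theorem mpow_psd {n : Type*} [Fintype n] [DecidableEq n] {A : Matrix n n ℂ} (hA : A.PosSemidef)
    (t : ℝ) : (mpow A t).PosSemidef := by
  rw [mpow_def' hA.1]
  rw [Matrix.star_eq_conjTranspose]
  apply Matrix.PosSemidef.mul_mul_conjTranspose_same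
  apply Matrix.PosSemidef.diagonal
  intro i
  have := Real.rpow_nonneg (hA.eigenvalues_nonneg i) t
  simpa using this

theorem mpow_mul_s16 {n : Type*} [Fintype n] [DecidableEq n] {A : Matrix n n ℂ} (hA : A.PosSemidef)
    {s t : ℝ} (h : s + t ≠ 0) : mpow A s * mpow A t = mpow A (s + t) := by
  rw [mpow_def' hA.1, mpow_def' hA.1, mpow_def' hA.1]
  have hU : star (hA.1.eigenvectorUnitary : Matrix n n ℂ) * (hA.1.eigenvectorUnitary : Matrix n n ℂ)
    = 1 := Unitary.coe_star_mul_self _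
  have : ∀ U D E V : Matrix n n ℂ, V * U = 1 → (U * D * V) * (U * E * V) = U * (D * E) * V := by
    intro U D E V h
    calc (U * D * V) * (U * E * V) = U * D * (V * U) * E * V := by noncomm_ring
      _ = _ := by rw [h]; noncomm_ring
  rw [this _ _ _ _ hU, diagonal_mul_diagonal]
  congr 3
  ext i
  rw [Real.rpow_add' (hA.eigenvalues_nonneg i) h]
  push_cast; rfl

theorem mpow_smul_mpow {n : Type*} [Fintype n] [DecidableEq n] {A : Matrix n n ℂ}
    (hA : A.PosSemidef) {c s t : ℝ} (hc : 0 ≤ c) :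
    mpow ((c : ℂ) • mpow A s) t = ((c ^ t : ℝ) : ℂ) • mpow A (s * t) := by
  have hfin : ∀ (f : ℝ → ℝ) (B : Matrix n n ℂ), ContinuousOn f (spectrum ℝ B) := fun f B =>
    B.finite_real_spectrum.continuousOn f
  have hsm : ∀ (r : ℝ) (B : Matrix n n ℂ), (r : ℂ) • B = r • B := fun r B => by
    ext i j; simp
  have h1 : ((c : ℂ) • mpow A s) = cfc (fun x : ℝ => c * x ^ s) A := by
    rw [mpow_eq_cfc hA.1, hsm, cfc_const_mul c _ A (hfin _ _)]
  have hh : ((c : ℂ) • mpow A s).IsHermitian := by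
    rw [h1]; exact cfc_predicate _ A
  have hA' : IsSelfAdjoint A := hA.1
  rw [mpow_eq_cfc hh, h1, ← cfc_comp' (fun x : ℝ => x ^ t) (fun x => c * x ^ s) A
    ((A.finite_real_spectrum.image _).continuousOn _) (hfin _ _) hA', mpow_eq_cfc hA.1, hsm,
    ← cfc_const_mul _ _ A (hfin _ _)]
  apply cfc_congr
  intro x hx
  obtain ⟨i, rfl⟩ := hA.1.spectrum_real_eq_range_eigenvalues ▸ hx
  have h0 := hA.eigenvalues_nonneg i
  simp only
  rw [Real.mul_rpow hc (Real.rpow_nonneg h0 _), Real.rpow_mul h0]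

theorem trace_mpow {n : Type*} [Fintype n] [DecidableEq n] {A : Matrix n n ℂ} (hA : A.IsHermitian)
    (t : ℝ) : (mpow A t).trace.re = ∑ i, hA.eigenvalues i ^ t := by
  have hU : star (hA.eigenvectorUnitary : Matrix n n ℂ) * (hA.eigenvectorUnitary : Matrix n n ℂ)
    = 1 := Unitary.coe_star_mul_self _
  rw [mpow_def' hA, Matrix.trace_mul_cycle, hU, one_mul, trace_diagonal]
  simp

theorem trace_mpow_congr {n : Type*} [Fintype n] [DecidableEq n] {A B : Matrix n n ℂ}
    (hA : A.IsHermitian) (hB : B.IsHermitian) (h : A.charpoly = B.charpoly) (t : ℝ) :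
    (mpow A t).trace.re = (mpow B t).trace.re := by
  rw [trace_mpow hA, trace_mpow hB, (hA.eigenvalues_eq_eigenvalues_iff hB).2 h]

theorem det_one_add_smul {n : Type*} [Fintype n] [DecidableEq n] {A : Matrix n n ℂ}
    (hA : A.IsHermitian) (t : ℝ) :
    (1 + (t : ℂ) • A).det = ((∏ i, (1 + t * hA.eigenvalues i) : ℝ) : ℂ) := by
  have hU : star (hA.eigenvectorUnitary : Matrix n n ℂ) * (hA.eigenvectorUnitary : Matrix n n ℂ)
    = 1 := Unitary.coe_star_mul_self _
  conv_lhs => rw [spec_eq hA]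
  rw [← Matrix.smul_mul, Matrix.det_one_add_mul_comm, Matrix.mul_smul, ← mul_assoc, hU, one_mul,
    ← diagonal_one, ← diagonal_smul, diagonal_add, det_diagonal]
  simp

theorem det_one_add_sq {n : Type*} [Fintype n] [DecidableEq n] {A : Matrix n n ℂ}
    (hA : A.IsHermitian) (t : ℝ) :
    (1 + (t : ℂ) • (A * A)).det = ((∏ i, (1 + t * hA.eigenvalues i ^ 2) : ℝ) : ℂ) := by
  have hU : star (hA.eigenvectorUnitary : Matrix n n ℂ) * (hA.eigenvectorUnitary : Matrix n n ℂ)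
    = 1 := Unitary.coe_star_mul_self _
  have : ∀ U D E V : Matrix n n ℂ, V * U = 1 → (U * D * V) * (U * E * V) = U * (D * E) * V := by
    intro U D E V h
    calc (U * D * V) * (U * E * V) = U * D * (V * U) * E * V := by noncomm_ring
      _ = _ := by rw [h]; noncomm_ring
  conv_lhs => rw [spec_eq hA]
  rw [this _ _ _ _ hU, ← Matrix.smul_mul, Matrix.det_one_add_mul_comm, Matrix.mul_smul,
    ← mul_assoc, hU, one_mul, diagonal_mul_diagonal,
    ← diagonal_one, ← diagonal_smul, diagonal_add, det_diagonal]
  simp [pow_two]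

theorem one_le_det_one_add {n : Type*} [Fintype n] [DecidableEq n] {S : Matrix n n ℂ}
    (hS : S.PosSemidef) : 1 ≤ (1 + S).det := by
  have := det_one_add_smul hS.1 1
  simp only [Complex.ofReal_one, one_smul, one_mul] at this
  rw [this]
  have : (1 : ℝ) ≤ ∏ i, (1 + hS.1.eigenvalues i) := by
    apply Finset.one_le_prod
    intro i _
    have := hS.eigenvalues_nonneg i
    change (1 : ℝ) ≤ 1 + hS.1.eigenvalues i
    linarith
  exact_mod_cast this

theorem det_le_det_add {n : Type*} [Fintype n] [DecidableEq n] {C S : Matrix n n ℂ}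
    (hC : IsUnit C.det) (hS : S.PosSemidef) :
    (Cᴴ * C).det ≤ (Cᴴ * C + S).det := by
  have h1 : Cᴴ * C + S = Cᴴ * (1 + (C⁻¹)ᴴ * S * C⁻¹) * C := by
    have h2 : C⁻¹ * C = 1 := Matrix.nonsing_inv_mul C hC
    have h3 : Cᴴ * (C⁻¹)ᴴ = 1 := by rw [← conjTranspose_mul, h2, conjTranspose_one]
    calc Cᴴ * C + S = Cᴴ * C + (Cᴴ * (C⁻¹)ᴴ) * S * (C⁻¹ * C) := by rw [h2, h3]; simp
      _ = _ := by noncomm_ring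
  have h4 := one_le_det_one_add (hS.conjTranspose_mul_mul_same C⁻¹)
  have h5 : 0 ≤ (Cᴴ * C).det := (Matrix.posSemidef_conjTranspose_mul_self C).det_nonneg
  have : (Cᴴ * C + S).det = (Cᴴ * C).det * (1 + (C⁻¹)ᴴ * S * C⁻¹).det := by
    rw [h1]; simp only [det_mul]; ring
  rw [this]
  exact le_mul_of_one_le_right h5 h4

theorem weyl_det {n : Type*} [Fintype n] [DecidableEq n] (T : Matrix n n ℂ) :
    ‖(1 + T * T).det‖ ≤ (1 + Tᴴ * T).det.re := by
  set P := 1 + T * Tᴴ with hP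
  set Q := 1 + Tᴴ * T with hQ
  set R := 1 + T * T with hR
  have hPd : P.PosDef := Matrix.PosDef.one.add_posSemidef (posSemidef_self_mul_conjTranspose T)
  have hPQ : P.det = Q.det := Matrix.det_one_add_mul_comm _ _
  have hPpos := hPd.det_pos
  by_cases hR0 : R.det = 0
  · rw [hR0, norm_zero, ← hPQ]
    exact (Complex.le_def.1 hPpos.le).1
  have hPu : IsUnit P.det := isUnit_iff_ne_zero.2 hPpos.ne'
  set K := P⁻¹ * R with hK
  have hPK : P * K = R := by rw [hK, ← mul_assoc, mul_nonsing_inv _ hPu, one_mul]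
  clear_value K
  obtain ⟨C, hC⟩ : ∃ C : Matrix n n ℂ, P = Cᴴ * C := by
    refine ⟨mpow P (1 / 2), ?_⟩
    rw [(mpow_herm_s16 hPd.1 _).eq, mpow_mul_s16 hPd.posSemidef (by norm_num)]
    norm_num
    rw [mpow_one' hPd.1]
  have hdec : Q = (C * K)ᴴ * (C * K) + ((1 - K)ᴴ * (1 - K) + (T - Tᴴ * K)ᴴ * (T - Tᴴ * K)) := by
    have e1 : (C * K)ᴴ * (C * K) = Kᴴ * R := by
      rw [conjTranspose_mul, ← hPK, hC]; noncomm_ring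
    have e2 : Kᴴ * P * K = Kᴴ * R := by rw [mul_assoc, hPK]
    have e3 : Kᴴ * P = Rᴴ := by
      rw [← hPK, conjTranspose_mul, hPd.1.eq]
    have e4 : Rᴴ = 1 + Tᴴ * Tᴴ := by simp [hR]
    have e5 : (1 - K)ᴴ * (1 - K) + (T - Tᴴ * K)ᴴ * (T - Tᴴ * K) =
        Q - Kᴴ * R - Rᴴ * K + Kᴴ * P * K := by
      rw [e4, hQ, hR, hP]
      simp only [conjTranspose_sub, conjTranspose_mul, conjTranspose_one, conjTranspose_conjTranspose]
      noncomm_ring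
    rw [e5, e1, e2, ← e3, e2]; noncomm_ring
  have hle : ((C * K)ᴴ * (C * K)).det ≤ Q.det := by
    rw [hdec]
    apply det_le_det_add
    · rw [isUnit_iff_ne_zero, det_mul]
      apply mul_ne_zero
      · intro h
        apply hPpos.ne'
        rw [hC, det_mul, h, mul_zero]
      · intro h
        apply hR0
        rw [← hPK, det_mul, h, mul_zero]
    · exact (posSemidef_conjTranspose_mul_self _).add (posSemidef_conjTranspose_mul_self _)
  have hdet : ((C * K)ᴴ * (C * K)).det * P.det = (((‖R.det‖ ^ 2 : ℝ)) : ℂ) := by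
    have e1 : (C * K)ᴴ * (C * K) = Kᴴ * P * K := by
      rw [conjTranspose_mul, hC]; noncomm_ring
    rw [e1, ← hPK]
    simp only [det_mul, det_conjTranspose, norm_mul]
    have h1 : P.det = ((‖P.det‖ : ℝ) : ℂ) := by
      have := Complex.eq_coe_norm_of_nonneg hPpos.le
      exact this
    have h2 : star K.det * K.det = ((‖K.det‖ ^ 2 : ℝ) : ℂ) := by
      simpa using Complex.conj_mul' K.det
    calc star K.det * P.det * K.det * P.det = P.det ^ 2 * (star K.det * K.det) := by ring
      _ = _ := by rw [h2, h1]; push_cast; simp; ring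
  have h3 := mul_le_mul_of_nonneg_right hle hPpos.le
  rw [hdet, hPQ] at h3
  have hQpos : 0 < Q.det := hPQ ▸ hPpos
  have hQ' := Complex.le_def.1 hQpos.le
  have h4 : (Q.det) = ((Q.det.re : ℝ) : ℂ) := by
    apply Complex.ext <;> simp
    simpa using hQ'.2.symm
  rw [h4] at h3
  have h5 : ‖R.det‖ ^ 2 ≤ Q.det.re * Q.det.re := by exact_mod_cast h3
  have : 0 ≤ Q.det.re := hQ'.1
  exact abs_le_of_sq_le_sq' (by nlinarith) this |>.2

open MeasureTheory in
theorem logint_integrable {z : ℝ} (hz : 0 < z) (hz1 : z < 1) {x : ℝ} (hx : 0 ≤ x) :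
    IntegrableOn (fun t : ℝ => Real.log (1 + t * x) * t ^ (-z - 1)) (Set.Ioi 0) := by
  have hmeas : Measurable (fun t : ℝ => Real.log (1 + t * x) * t ^ (-z - 1)) := by fun_prop
  rw [← Set.Ioc_union_Ioi_eq_Ioi (zero_le_one (α := ℝ))]
  apply IntegrableOn.union
  · have h1 : IntegrableOn (fun t : ℝ => x * t ^ (-z)) (Set.Ioc 0 1) := by
      apply Integrable.const_mul
      have := (intervalIntegral.intervalIntegrable_rpow' (a := 0) (b := 1) (r := -z) (by linarith))
      rwa [intervalIntegrable_iff_integrableOn_Ioc_of_le zero_le_one] at this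
    refine h1.mono' hmeas.aestronglyMeasurable ?_
    filter_upwards [ae_restrict_mem measurableSet_Ioc] with t ht
    have ht0 : 0 < t := ht.1
    have hl : 0 ≤ Real.log (1 + t * x) := Real.log_nonneg (by nlinarith)
    rw [Real.norm_of_nonneg (by positivity)]
    have hl2 : Real.log (1 + t * x) ≤ t * x := by
      have := Real.log_le_sub_one_of_pos (x := 1 + t * x) (by positivity)
      linarith
    calc _ ≤ t * x * t ^ (-z - 1) := by gcongr
      _ = _ := by
        rw [show -z = (-z - 1) + 1 by ring, Real.rpow_add_one ht0.ne']
        ring_nf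
  · set C := ((1 + x) ^ (z / 2) / (z / 2)) with hC
    have h1 : IntegrableOn (fun t : ℝ => C * t ^ (-(z / 2) - 1)) (Set.Ioi 1) := by
      apply Integrable.const_mul
      exact integrableOn_Ioi_rpow_of_lt (by linarith) one_pos
    refine h1.mono' hmeas.aestronglyMeasurable ?_
    filter_upwards [ae_restrict_mem measurableSet_Ioi] with t ht
    have ht1 : 1 < t := ht
    have ht0 : 0 < t := by linarith
    have hl : 0 ≤ Real.log (1 + t * x) := Real.log_nonneg (by nlinarith)
    rw [Real.norm_of_nonneg (by positivity)]
    have hl2 : Real.log (1 + t * x) ≤ C * t ^ (z / 2) := by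
      calc _ ≤ (1 + t * x) ^ (z / 2) / (z / 2) :=
            Real.log_le_rpow_div (by positivity) (by positivity)
        _ ≤ ((1 + x) * t) ^ (z / 2) / (z / 2) := by
            gcongr
            nlinarith
        _ = _ := by rw [Real.mul_rpow (by positivity) (by positivity), hC]; ring
    calc _ ≤ C * t ^ (z / 2) * t ^ (-z - 1) := by gcongr
      _ = _ := by
        rw [mul_assoc, ← Real.rpow_add ht0]
        ring_nf

open MeasureTheory in
theorem logint_eq {z : ℝ} (hz : 0 < z) {x : ℝ} (hx : 0 ≤ x) :
    ∫ t in Set.Ioi (0 : ℝ), Real.log (1 + t * x) * t ^ (-z - 1) =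
      x ^ z * ∫ t in Set.Ioi (0 : ℝ), Real.log (1 + t * 1) * t ^ (-z - 1) := by
  rcases hx.eq_or_lt with rfl | hx
  · simp [Real.zero_rpow hz.ne']
  have := integral_comp_mul_left_Ioi (fun t => Real.log (1 + t * 1) * t ^ (-z - 1)) 0 hx
  simp only [mul_zero, smul_eq_mul] at this
  have h2 : ∫ t in Set.Ioi (0 : ℝ), Real.log (1 + x * t * 1) * (x * t) ^ (-z - 1) =
      x ^ (-z - 1) * ∫ t in Set.Ioi (0 : ℝ), Real.log (1 + t * x) * t ^ (-z - 1) := by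
    rw [← integral_const_mul]
    apply setIntegral_congr_fun measurableSet_Ioi
    intro t ht
    have ht : 0 < t := ht
    simp only
    rw [Real.mul_rpow hx.le ht.le, mul_one, mul_comm x t]; ring
  rw [h2] at this
  have h3 : x ^ (-z - 1) = (x ^ z)⁻¹ * x⁻¹ := by
    rw [Real.rpow_sub_one hx.ne', Real.rpow_neg hx.le]; rfl
  rw [h3] at this
  have h4 : 0 < x ^ z := by positivity
  simp only [mul_one] at this ⊢
  field_simp at this
  simp only [mul_comm x] at this
  linarith

open MeasureTheory in
theorem logint_pos {z : ℝ} (hz : 0 < z) (hz1 : z < 1) :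
    0 < ∫ t in Set.Ioi (0 : ℝ), Real.log (1 + t * 1) * t ^ (-z - 1) := by
  rw [setIntegral_pos_iff_support_of_nonneg_ae]
  · have : Set.Ioi (0 : ℝ) ⊆ (Function.support fun t : ℝ => Real.log (1 + t * 1) * t ^ (-z - 1)) := by
      intro t ht
      have ht : 0 < t := ht
      have : 0 < Real.log (1 + t * 1) := Real.log_pos (by linarith)
      simp only [Function.mem_support]
      positivity
    rw [Set.inter_eq_right.2 this]
    simp
  · filter_upwards [ae_restrict_mem measurableSet_Ioi] with t ht
    have ht : 0 < t := ht
    have : 0 < Real.log (1 + t * 1) := Real.log_pos (by linarith)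
    simp only [Pi.zero_apply]
    positivity
  · exact logint_integrable hz hz1 zero_le_one

open MeasureTheory in
theorem sum_rpow_le_of_prod_le {ι : Type*} [Fintype ι] {z : ℝ} (hz : 0 < z) (hz1 : z < 1)
    (x y : ι → ℝ) (hx : ∀ i, 0 ≤ x i) (hy : ∀ i, 0 ≤ y i)
    (h : ∀ t : ℝ, 0 < t → ∏ i, (1 + t * x i) ≤ ∏ i, (1 + t * y i)) :
    ∑ i, x i ^ z ≤ ∑ i, y i ^ z := by
  have hc := logint_pos hz hz1
  rw [← mul_le_mul_iff_left₀ hc, Finset.sum_mul, Finset.sum_mul]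
  simp_rw [← logint_eq hz (hx _), ← logint_eq hz (hy _)]
  rw [← integral_finsetSum _ (fun i _ => logint_integrable hz hz1 (hx i)),
    ← integral_finsetSum _ (fun i _ => logint_integrable hz hz1 (hy i))]
  apply setIntegral_mono_on
    (integrable_finsetSum _ (fun i _ => logint_integrable hz hz1 (hx i)))
    (integrable_finsetSum _ (fun i _ => logint_integrable hz hz1 (hy i))) measurableSet_Ioi
  intro t ht
  have ht : 0 < t := ht
  rw [← Finset.sum_mul, ← Finset.sum_mul]
  have px : ∀ i, 0 < 1 + t * x i := fun i => by have := hx i; positivity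
  have py : ∀ i, 0 < 1 + t * y i := fun i => by have := hy i; positivity
  rw [← Real.log_prod (fun i _ => (px i).ne'), ← Real.log_prod (fun i _ => (py i).ne')]
  have := Real.log_le_log (Finset.prod_pos fun i _ => px i) (h t ht)
  gcongr

theorem Qaz_double {n : Type*} [Fintype n] [DecidableEq n] {α z : ℝ} (hα : 1 < α) (hz : 0 < z)
    (hz1 : z < 1) {ρ σ : Matrix n n ℂ} (hρ : ρ.PosSemidef) (hσ : σ.PosSemidef) :
    Qaz α (2 * z) ρ σ ≤ Qaz α z ρ σ := by
  unfold Qaz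
  set A := mpow ρ (α / (2 * z)) with hA
  set B := mpow σ ((1 - α) / (2 * z)) with hB
  set B' := mpow σ ((1 - α) / (2 * (2 * z))) with hB'
  have hAA : mpow ρ (α / z) = A * A := by
    have : α / z = α / (2 * z) + α / (2 * z) := by field_simp; ring
    rw [hA, mpow_mul_s16 hρ (by rw [← this]; positivity), ← this]
  have hBB : B' * B' = B := by
    have : (1 - α) / (2 * z) = (1 - α) / (2 * (2 * z)) + (1 - α) / (2 * (2 * z)) := by
      field_simp; ring
    have h0 : (1 - α) / (2 * z) ≠ 0 := div_ne_zero (by linarith) (by positivity)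
    rw [hB, hB', mpow_mul_s16 hσ (by rw [← this]; exact h0), ← this]
  have hAh : Aᴴ = A := (mpow_herm_s16 hρ.1 _).eq
  have hBh : Bᴴ = B := (mpow_herm_s16 hσ.1 _).eq
  have hBh' : B'ᴴ = B' := (mpow_herm_s16 hσ.1 _).eq
  have hMT : B * mpow ρ (α / z) * B = (A * B)ᴴ * (A * B) := by
    rw [hAA, conjTranspose_mul, hAh, hBh]; noncomm_ring
  rw [hMT]
  have hM : ((A * B)ᴴ * (A * B)).PosSemidef := posSemidef_conjTranspose_mul_self _
  have hH : (B' * A * B').PosSemidef := by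
    have := (mpow_psd hρ (α / (2 * z))).mul_mul_conjTranspose_same B'
    rwa [hBh'] at this
  rw [trace_mpow hM.1, trace_mpow hH.1]
  have hpw : ∀ i, hH.1.eigenvalues i ^ (2 * z) = (hH.1.eigenvalues i ^ 2) ^ z := fun i => by
    rw [Real.rpow_mul (hH.eigenvalues_nonneg i)]
    simp
  simp_rw [hpw]
  apply sum_rpow_le_of_prod_le hz hz1 _ _ (fun i => sq_nonneg _) (fun i => hM.eigenvalues_nonneg i)
  intro t ht
  have e1 := det_one_add_sq hH.1 t
  have e2 := det_one_add_smul hM.1 t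
  have hs : ((Real.sqrt t : ℝ) : ℂ) * ((Real.sqrt t : ℝ) : ℂ) = (t : ℂ) := by
    rw [← Complex.ofReal_mul, Real.mul_self_sqrt ht.le]
  have e3 := weyl_det (((Real.sqrt t : ℝ) : ℂ) • (A * B))
  have e4 : (((Real.sqrt t : ℝ) : ℂ) • (A * B))ᴴ = ((Real.sqrt t : ℝ) : ℂ) • (A * B)ᴴ := by
    rw [conjTranspose_smul]; simp
  rw [e4, smul_mul_smul_comm, smul_mul_smul_comm, hs, e2, Complex.ofReal_re] at e3
  have e5 : (1 + (t : ℂ) • (B' * A * B' * (B' * A * B'))).det =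
      (1 + (t : ℂ) • (A * B * (A * B))).det := by
    have h1 : (t : ℂ) • (B' * A * B' * (B' * A * B')) = ((t : ℂ) • B') * (A * B * A * B') := by
      rw [← hBB, smul_mul_assoc]; congr 1; noncomm_ring
    have h2 : (t : ℂ) • (A * B * (A * B)) = (A * B * A * B') * ((t : ℂ) • B') := by
      rw [mul_smul_comm]; congr 1; rw [← hBB]; noncomm_ring
    rw [h1, h2, det_one_add_mul_comm]
  rw [← e5, e1, Complex.norm_real] at e3
  exact (le_abs_self _).trans e3

theorem trace_two {n : Type*} [Fintype n] [DecidableEq n] (U V : Matrix n n ℂ) (f g : n → ℝ) :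
    ((U * diagonal (fun i => (f i : ℂ)) * star U) *
      (V * diagonal (fun i => (g i : ℂ)) * star V)).trace.re =
      ∑ i, ∑ j, Complex.normSq ((star U * V) i j) * (f i * g j) := by
  have h1 : ((U * diagonal (fun i => (f i : ℂ)) * star U) *
      (V * diagonal (fun i => (g i : ℂ)) * star V)).trace =
      (diagonal (fun i => (f i : ℂ)) * ((star U * V) * diagonal (fun i => (g i : ℂ)) *
        (star U * V)ᴴ)).trace := by
    rw [conjTranspose_mul, ← star_eq_conjTranspose, ← star_eq_conjTranspose, star_star,
      mul_assoc U, mul_assoc U, trace_mul_comm U]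
    congr 1
    noncomm_ring
  rw [h1, trace]
  simp only [diag_apply, diagonal_mul, Complex.re_sum]
  apply Finset.sum_congr rfl
  intro i _
  rw [mul_apply, Finset.mul_sum, Complex.re_sum]
  apply Finset.sum_congr rfl
  intro j _
  rw [mul_diagonal, conjTranspose_apply]
  generalize (star U * V) i j = w
  have : (f i : ℂ) * (w * (g j : ℂ) * star w) = ((f i * g j * Complex.normSq w : ℝ) : ℂ) := by
    have := Complex.mul_conj w
    simp only [Complex.star_def]
    push_cast
    rw [← this]; ring
  rw [this, Complex.ofReal_re]; ring

theorem weights_sum {n : Type*} [Fintype n] [DecidableEq n] (U V : unitaryGroup n ℂ) :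
    (∀ i, ∑ j, Complex.normSq ((star (U : Matrix n n ℂ) * (V : Matrix n n ℂ)) i j) = 1) ∧
    (∀ j, ∑ i, Complex.normSq ((star (U : Matrix n n ℂ) * (V : Matrix n n ℂ)) i j) = 1) := by
  have key : ∀ W : unitaryGroup n ℂ, ∀ i, ∑ j, Complex.normSq ((W : Matrix n n ℂ) i j) = 1 := by
    intro W i
    have h0 : (W : Matrix n n ℂ) * star (W : Matrix n n ℂ) = 1 :=
      Unitary.mul_star_self_of_mem W.2
    have h := congr_fun (congr_fun h0 i) i
    rw [star_eq_conjTranspose, mul_apply] at h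
    simp only [conjTranspose_apply, Complex.star_def, Complex.mul_conj, one_apply_eq] at h
    exact_mod_cast h
  refine ⟨fun i => key (star U * V) i, fun j => ?_⟩
  rw [← key (star V * U) j]
  apply Finset.sum_congr rfl
  intro i _
  have : (star (U : Matrix n n ℂ) * (V : Matrix n n ℂ)) i j =
      star ((star (V : Matrix n n ℂ) * (U : Matrix n n ℂ)) j i) := by
    rw [← conjTranspose_apply, conjTranspose_mul]
    simp [star_eq_conjTranspose]
  rw [this, Complex.star_def, Complex.normSq_conj]
  rfl

theorem bern {s κ p q : ℝ} (hs : 0 < s) (hκ : 0 < κ) (hp : 0 ≤ p) (hq : 0 < q) :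
    (1 + s) * κ ^ s * p - s * κ ^ (1 + s) * q ≤ p ^ (1 + s) * q ^ (-s) ∧
    (p ^ (1 + s) * q ^ (-s) = (1 + s) * κ ^ s * p - s * κ ^ (1 + s) * q → p = κ * q) := by
  obtain ⟨x, hx, rfl⟩ : ∃ x, 0 ≤ x ∧ p = x * (κ * q) :=
    ⟨p / (κ * q), by positivity, by field_simp⟩
  have h1 : (x * (κ * q)) ^ (1 + s) * q ^ (-s) = κ ^ (1 + s) * q * x ^ (1 + s) := by
    rw [Real.mul_rpow hx (by positivity), Real.mul_rpow hκ.le hq.le, Real.rpow_neg hq.le,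
      Real.rpow_add hq, Real.rpow_one]
    have : 0 < q ^ s := by positivity
    field_simp
  have h2 : (1 + s) * κ ^ s * (x * (κ * q)) - s * κ ^ (1 + s) * q =
      κ ^ (1 + s) * q * (1 + (1 + s) * (x - 1)) := by
    rw [Real.rpow_add hκ, Real.rpow_one]; ring
  rw [h1, h2]
  have hc : 0 < κ ^ (1 + s) * q := by positivity
  constructor
  · apply mul_le_mul_of_nonneg_left _ hc.le
    have := one_add_mul_self_le_rpow_one_add (s := x - 1) (by linarith) (p := 1 + s) (by linarith)
    simpa using this
  · intro h
    have h := mul_left_cancel₀ hc.ne' h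
    by_contra hne
    have hx1 : x ≠ 1 := fun hx1 => hne (by rw [hx1, one_mul])
    have := one_add_mul_self_lt_rpow_one_add (s := x - 1) (by linarith) (sub_ne_zero.2 hx1)
      (p := 1 + s) (by linarith)
    rw [show 1 + (x - 1) = x by ring] at this
    linarith

theorem trace_re_eq {n : Type*} [Fintype n] [DecidableEq n] {A : Matrix n n ℂ}
    (hA : A.IsHermitian) : A.trace.re = ∑ i, hA.eigenvalues i := by
  have := trace_mpow hA 1
  rw [mpow_one' hA] at this
  simpa using this

theorem petz {n : Type*} [Fintype n] [DecidableEq n] {s κ : ℝ} (hs : 0 < s) (hκ : 0 < κ)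
    {ρ σ : Matrix n n ℂ} (hρ : ρ.PosSemidef) (hσ : σ.PosSemidef)
    (hsupp : ∀ v : n → ℂ, σ *ᵥ v = 0 → ρ *ᵥ v = 0) :
    (1 + s) * κ ^ s * ρ.trace.re - s * κ ^ (1 + s) * σ.trace.re ≤
      (mpow ρ (1 + s) * mpow σ (-s)).trace.re ∧
    ((mpow ρ (1 + s) * mpow σ (-s)).trace.re =
      (1 + s) * κ ^ s * ρ.trace.re - s * κ ^ (1 + s) * σ.trace.re → ρ = (κ : ℂ) • σ) := by
  set U := hρ.1.eigenvectorUnitary with hU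
  set V := hσ.1.eigenvectorUnitary with hV
  set p := hρ.1.eigenvalues with hp
  set q := hσ.1.eigenvalues with hq
  set W := star (U : Matrix n n ℂ) * (V : Matrix n n ℂ) with hW
  obtain ⟨hw1, hw2⟩ := weights_sum U V
  have hUU : star (U : Matrix n n ℂ) * (U : Matrix n n ℂ) = 1 := Unitary.coe_star_mul_self _
  have hUU' : (U : Matrix n n ℂ) * star (U : Matrix n n ℂ) = 1 :=
    Unitary.mul_star_self_of_mem U.2
  have hVV : star (V : Matrix n n ℂ) * (V : Matrix n n ℂ) = 1 := Unitary.coe_star_mul_self _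
  have hVV' : (V : Matrix n n ℂ) * star (V : Matrix n n ℂ) = 1 :=
    Unitary.mul_star_self_of_mem V.2
  have hρs : ρ = U * diagonal (fun i => (p i : ℂ)) * star (U : Matrix n n ℂ) := spec_eq hρ.1
  have hσs : σ = V * diagonal (fun i => (q i : ℂ)) * star (V : Matrix n n ℂ) := spec_eq hσ.1
  have hp0 : ∀ i, 0 ≤ p i := hρ.eigenvalues_nonneg
  have hq0 : ∀ i, 0 ≤ q i := hσ.eigenvalues_nonneg
  have hρV : star (U : Matrix n n ℂ) * (ρ * V) = diagonal (fun i => (p i : ℂ)) * W := by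
    conv_lhs => rw [hρs]
    calc _ = (star (U : Matrix n n ℂ) * (U : Matrix n n ℂ)) * diagonal (fun i => (p i : ℂ)) * W := by
          rw [hW]; noncomm_ring
      _ = _ := by rw [hUU, one_mul]
  have hzero : ∀ i j, q j = 0 → (p i : ℂ) * W i j = 0 := by
    intro i j hj
    have h1 : σ *ᵥ (fun k => (V : Matrix n n ℂ) k j) = 0 := by
      have h2 : σ * V = V * diagonal (fun i => (q i : ℂ)) := by
        conv_lhs => rw [hσs]
        rw [mul_assoc, hVV, mul_one]
      ext k
      have h3 := congr_fun (congr_fun h2 k) j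
      rw [mul_diagonal, hj] at h3
      simpa [mul_apply, mulVec, dotProduct] using h3
    have h4 := hsupp _ h1
    have h5 : ∀ k, (ρ * V) k j = 0 := by
      intro k
      have := congr_fun h4 k
      simpa [mul_apply, mulVec, dotProduct] using this
    have h6 := congr_fun (congr_fun hρV i) j
    rw [diagonal_mul, mul_apply] at h6
    rw [← h6]
    simp [h5]
  have hL : (1 + s) * κ ^ s * ρ.trace.re - s * κ ^ (1 + s) * σ.trace.re =
      ∑ i, ∑ j, Complex.normSq (W i j) * ((1 + s) * κ ^ s * p i - s * κ ^ (1 + s) * q j) := by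
    simp_rw [mul_sub, Finset.sum_sub_distrib]
    congr 1
    · rw [trace_re_eq hρ.1, Finset.mul_sum]
      apply Finset.sum_congr rfl
      intro i _
      rw [← Finset.sum_mul, hw1 i, one_mul]
    · rw [Finset.sum_comm, trace_re_eq hσ.1, Finset.mul_sum]
      apply Finset.sum_congr rfl
      intro i _
      rw [← Finset.sum_mul, hw2 i, one_mul]
  have hR : (mpow ρ (1 + s) * mpow σ (-s)).trace.re =
      ∑ i, ∑ j, Complex.normSq (W i j) * (p i ^ (1 + s) * q j ^ (-s)) := by
    rw [mpow_def' hρ.1, mpow_def' hσ.1]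
    exact trace_two _ _ (fun i => p i ^ (1 + s)) (fun i => q i ^ (-s))
  rw [hL, hR]
  have hterm : ∀ i j, Complex.normSq (W i j) * ((1 + s) * κ ^ s * p i - s * κ ^ (1 + s) * q j) ≤
      Complex.normSq (W i j) * (p i ^ (1 + s) * q j ^ (-s)) := by
    intro i j
    rcases (hq0 j).eq_or_lt with h | h
    · rcases mul_eq_zero.1 (hzero i j h.symm) with h' | h'
      · have h' : p i = 0 := by exact_mod_cast h'
        rw [h', ← h, Real.zero_rpow (by positivity)]
        simp
      · simp [h']
    · exact mul_le_mul_of_nonneg_left (bern hs hκ (hp0 i) h).1 (Complex.normSq_nonneg _)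
  refine ⟨Finset.sum_le_sum fun i _ => Finset.sum_le_sum fun j _ => hterm i j, fun heq => ?_⟩
  have h1 := (Finset.sum_eq_sum_iff_of_le
    (fun i _ => Finset.sum_le_sum fun j _ => hterm i j)).1 heq.symm
  have hall : ∀ i j, (p i : ℂ) * W i j = W i j * (κ * q j : ℂ) := by
    intro i j
    have h2 := (Finset.sum_eq_sum_iff_of_le (fun j _ => hterm i j)).1 (h1 i (Finset.mem_univ _)) j
      (Finset.mem_univ _)
    rcases (hq0 j).eq_or_lt with h | h
    · rw [hzero i j h.symm, ← h]; simp
    · by_cases hw : W i j = 0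
      · simp [hw]
      · have h3 := mul_left_cancel₀ (fun h => hw (Complex.normSq_eq_zero.1 h)) h2
        have h4 := (bern hs hκ (hp0 i) h).2 h3.symm
        rw [h4]; push_cast; ring
  have hmat : diagonal (fun i => (p i : ℂ)) * W = W * ((κ : ℂ) • diagonal (fun j => (q j : ℂ))) := by
    ext i j
    rw [← diagonal_smul, diagonal_mul, mul_diagonal, hall i j]
    rfl
  calc ρ = U * (diagonal (fun i => (p i : ℂ)) * W) * star (V : Matrix n n ℂ) := by
        rw [hρs, hW]
        calc _ = U * diagonal (fun i => (p i : ℂ)) * star (U : Matrix n n ℂ) *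
              ((V : Matrix n n ℂ) * star (V : Matrix n n ℂ)) := by rw [hVV', mul_one]
          _ = _ := by noncomm_ring
    _ = ((U : Matrix n n ℂ) * star (U : Matrix n n ℂ)) * V *
          ((κ : ℂ) • diagonal (fun j => (q j : ℂ))) * star (V : Matrix n n ℂ) := by
        rw [hmat, hW]; noncomm_ring
    _ = (κ : ℂ) • σ := by
        rw [hUU', one_mul, mul_smul_comm, smul_mul_assoc, ← hσs]

theorem young {n : Type*} [Fintype n] [DecidableEq n] {z c : ℝ} (hz : 1 ≤ z) (hc : 0 < c)
    {M ρ : Matrix n n ℂ} (hM : M.PosSemidef) (hρ : ρ.PosSemidef) :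
    c ^ (1 / z) * (M * mpow ρ (1 - 1 / z)).trace.re ≤
      (1 / z) * (c * (mpow M z).trace.re) + (1 - 1 / z) * ρ.trace.re := by
  have hz0 : 0 < z := by linarith
  have hzi : 1 / z ≤ 1 := by rw [div_le_one hz0]; exact hz
  set m := hM.1.eigenvalues with hm
  set p := hρ.1.eigenvalues with hp
  obtain ⟨hw1, hw2⟩ := weights_sum hM.1.eigenvectorUnitary hρ.1.eigenvectorUnitary
  have hL : (M * mpow ρ (1 - 1 / z)).trace.re = ∑ i, ∑ j,
      Complex.normSq ((star (hM.1.eigenvectorUnitary : Matrix n n ℂ) *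
        (hρ.1.eigenvectorUnitary : Matrix n n ℂ)) i j) * (m i * p j ^ (1 - 1 / z)) := by
    rw [mpow_def' hρ.1, ← trace_two _ _ m (fun i => p i ^ (1 - 1 / z)), ← spec_eq hM.1]
  rw [hL, trace_mpow hM.1, trace_re_eq hρ.1]
  set w : n → n → ℝ := fun i j =>
      Complex.normSq ((star (hM.1.eigenvectorUnitary : Matrix n n ℂ) *
        (hρ.1.eigenvectorUnitary : Matrix n n ℂ)) i j) with hw
  have hR : (1 / z) * (c * ∑ i, m i ^ z) + (1 - 1 / z) * ∑ i, p i =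
      ∑ i, ∑ j, w i j * ((1 / z) * (c * m i ^ z) + (1 - 1 / z) * p j) := by
    simp_rw [mul_add, Finset.sum_add_distrib]
    congr 1
    · rw [Finset.mul_sum, Finset.mul_sum]
      apply Finset.sum_congr rfl
      intro i _
      rw [← Finset.sum_mul, hw1 i, one_mul]
    · rw [Finset.sum_comm, Finset.mul_sum]
      apply Finset.sum_congr rfl
      intro i _
      rw [← Finset.sum_mul, hw2 i, one_mul]
  rw [hR, Finset.mul_sum]
  apply Finset.sum_le_sum; intro i _
  rw [Finset.mul_sum]
  apply Finset.sum_le_sum; intro j _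
  have hm0 := hM.eigenvalues_nonneg i
  have hp0 := hρ.eigenvalues_nonneg j
  have h := Real.geom_mean_le_arith_mean2_weighted (w₁ := 1 / z) (w₂ := 1 - 1 / z)
    (p₁ := c * m i ^ z) (p₂ := p j) (by positivity) (by linarith)
    (mul_nonneg hc.le (Real.rpow_nonneg hm0 _)) hp0 (by ring)
  rw [Real.mul_rpow hc.le (Real.rpow_nonneg hm0 _), ← Real.rpow_mul hm0,
    mul_one_div_cancel hz0.ne', Real.rpow_one] at h
  have := mul_le_mul_of_nonneg_left h (Complex.normSq_nonneg ((star (hM.1.eigenvectorUnitary : Matrix n n ℂ) *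
        (hρ.1.eigenvectorUnitary : Matrix n n ℂ)) i j))
  calc _ = w i j * (c ^ (1 / z) * m i * p j ^ (1 - 1 / z)) := by ring
    _ ≤ _ := this

theorem Qaz_ge_of_one_le {n : Type*} [Fintype n] [DecidableEq n] {α z : ℝ} (hα : 1 < α)
    (hz : 1 ≤ z) {ρ σ : Matrix n n ℂ} (hρ : ρ.PosSemidef) (hσ : σ.PosSemidef)
    (hsupp : ∀ v : n → ℂ, σ *ᵥ v = 0 → ρ *ᵥ v = 0) {κ : ℝ} (hκ : 0 < κ)
    (htr : ρ.trace.re = κ * σ.trace.re) :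
    κ ^ (α - 1) * ρ.trace.re ≤ Qaz α z ρ σ ∧
    (Qaz α z ρ σ = κ ^ (α - 1) * ρ.trace.re → ρ = (κ : ℂ) • σ) := by
  have hz0 : 0 < z := by linarith
  obtain ⟨s, hs⟩ : ∃ s, s = (α - 1) / z := ⟨_, rfl⟩
  have hs0 : 0 < s := by rw [hs]; exact div_pos (by linarith) hz0
  set A := mpow ρ (α / (2 * z)) with hA
  set B := mpow σ ((1 - α) / (2 * z)) with hB
  have hAA : mpow ρ (α / z) = A * A := by
    have : α / z = α / (2 * z) + α / (2 * z) := by field_simp; ring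
    rw [hA, mpow_mul_s16 hρ (by rw [← this]; positivity), ← this]
  have hBB : B * B = mpow σ (-s) := by
    have : -s = (1 - α) / (2 * z) + (1 - α) / (2 * z) := by
      rw [hs]; field_simp; ring
    rw [hB, mpow_mul_s16 hσ (by rw [← this]; linarith), ← this]
  have hAh : Aᴴ = A := (mpow_herm_s16 hρ.1 _).eq
  have hBh : Bᴴ = B := (mpow_herm_s16 hσ.1 _).eq
  have hM : (A * mpow σ (-s) * A).PosSemidef := by
    have := (mpow_psd hσ (-s)).mul_mul_conjTranspose_same A
    rwa [hAh] at this
  have hM' : (B * mpow ρ (α / z) * B).PosSemidef := by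
    have := (mpow_psd hρ (α / z)).mul_mul_conjTranspose_same B
    rwa [hBh] at this
  have hQ : Qaz α z ρ σ = (mpow (A * mpow σ (-s) * A) z).trace.re := by
    unfold Qaz
    apply trace_mpow_congr hM'.1 hM.1
    rw [hAA, ← hBB, show B * (A * A) * B = (B * A) * (A * B) by noncomm_ring,
      charpoly_mul_comm, show A * (B * B) * A = A * B * (B * A) by noncomm_ring]
  have hY := young hz (c := κ ^ (1 - α)) (by positivity) hM hρ
  rw [← hQ] at hY
  have hT : (A * mpow σ (-s) * A * mpow ρ (1 - 1 / z)).trace =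
      (mpow ρ (1 + s) * mpow σ (-s)).trace := by
    have e1 : A * mpow ρ (1 - 1 / z) * A = mpow ρ (1 + s) := by
      have h0 : 0 ≤ 1 - 1 / z := by
        have : 1 / z ≤ 1 := by rw [div_le_one hz0]; exact hz
        linarith
      have h1 : 0 < α / (2 * z) := by positivity
      rw [hA, mpow_mul_s16 hρ (by positivity), mpow_mul_s16 hρ (by positivity)]
      congr 1
      rw [hs]; field_simp; ring
    rw [← e1, show A * mpow σ (-s) * A * mpow ρ (1 - 1 / z) =
      (A * mpow σ (-s)) * (A * mpow ρ (1 - 1 / z)) by noncomm_ring, trace_mul_comm]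
    congr 1
    noncomm_ring
  rw [hT] at hY
  obtain ⟨hP, hPeq⟩ := petz hs0 hκ hρ hσ hsupp
  have hb : (1 + s) * κ ^ s * ρ.trace.re - s * κ ^ (1 + s) * σ.trace.re = κ ^ s * ρ.trace.re := by
    rw [Real.rpow_add hκ, Real.rpow_one, htr]; ring
  rw [hb] at hP hPeq
  have hk : (κ ^ (1 - α)) ^ (1 / z) = (κ ^ s)⁻¹ := by
    rw [← Real.rpow_mul hκ.le, ← Real.rpow_neg hκ.le, hs]; congr 1; field_simp; ring
  have hk2 : κ ^ (1 - α) = (κ ^ (α - 1))⁻¹ := by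
    rw [← Real.rpow_neg hκ.le]; congr 1; ring
  rw [hk, hk2] at hY
  set D := (mpow ρ (1 + s) * mpow σ (-s)).trace.re with hD
  set a := ρ.trace.re with ha
  have hks : 0 < κ ^ s := by positivity
  have hka : 0 < κ ^ (α - 1) := by positivity
  have h1 : a ≤ (κ ^ s)⁻¹ * D := by
    rw [le_inv_mul_iff₀ hks]; exact hP
  constructor
  · have h2 : (1 / z) * a ≤ (1 / z) * ((κ ^ (α - 1))⁻¹ * Qaz α z ρ σ) := by linarith
    have h3 := le_of_mul_le_mul_left h2 (by positivity)
    rwa [le_inv_mul_iff₀ hka] at h3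
  · intro he
    apply hPeq
    apply le_antisymm _ hP
    rw [he, inv_mul_cancel_left₀ hka.ne'] at hY
    rw [← inv_mul_le_iff₀ hks]
    linarith

theorem Qaz_ge {n : Type*} [Fintype n] [DecidableEq n] {α : ℝ} (hα : 1 < α)
    {ρ σ : Matrix n n ℂ} (hρ : ρ.PosSemidef) (hσ : σ.PosSemidef)
    (hsupp : ∀ v : n → ℂ, σ *ᵥ v = 0 → ρ *ᵥ v = 0) {κ : ℝ} (hκ : 0 < κ)
    (htr : ρ.trace.re = κ * σ.trace.re) (k : ℕ) : ∀ z : ℝ, 0 < z → 1 ≤ 2 ^ k * z →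
    κ ^ (α - 1) * ρ.trace.re ≤ Qaz α z ρ σ ∧
    (Qaz α z ρ σ = κ ^ (α - 1) * ρ.trace.re → ρ = (κ : ℂ) • σ) := by
  induction k with
  | zero =>
    intro z _ hz
    exact Qaz_ge_of_one_le hα (by simpa using hz) hρ hσ hsupp hκ htr
  | succ k ih =>
    intro z hz0 hz
    by_cases h1 : 1 ≤ z
    · exact Qaz_ge_of_one_le hα h1 hρ hσ hsupp hκ htr
    · obtain ⟨h2, h3⟩ := ih (2 * z) (by positivity) (by rw [pow_succ] at hz; linarith)
      have h4 := Qaz_double hα hz0 (not_le.1 h1) hρ hσ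
      exact ⟨h2.trans h4, fun h => h3 (le_antisymm (h4.trans h.le) h2)⟩

theorem Qaz_smul {n : Type*} [Fintype n] [DecidableEq n] {α z : ℝ} (hz : 0 < z)
    {σ : Matrix n n ℂ} (hσ : σ.PosSemidef) (hα : 1 < α) {κ : ℝ} (hκ : 0 < κ) :
    Qaz α z ((κ : ℂ) • σ) σ = κ ^ α * σ.trace.re := by
  unfold Qaz
  have h1 : mpow ((κ : ℂ) • σ) (α / z) = ((κ ^ (α / z) : ℝ) : ℂ) • mpow σ (α / z) := by
    have := mpow_smul_mpow hσ (c := κ) (s := 1) (t := α / z) hκ.le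
    rwa [mpow_one' hσ.1, one_mul] at this
  have h2 : (1 - α) / (2 * z) + α / z = (1 + α) / (2 * z) := by field_simp; ring
  have h3 : (1 + α) / (2 * z) + (1 - α) / (2 * z) = 1 / z := by field_simp; ring
  have h4 : 0 < (1 + α) / (2 * z) := div_pos (by linarith) (by positivity)
  rw [h1, mul_smul_comm, smul_mul_assoc, mpow_mul_s16 hσ (by rw [h2]; exact h4.ne'), h2,
    mpow_mul_s16 hσ (by rw [h3]; positivity), h3, mpow_smul_mpow hσ (by positivity),
    one_div_mul_cancel hz.ne', mpow_one' hσ.1, ← Real.rpow_mul hκ.le, div_mul_cancel₀ _ hz.ne',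
    trace_smul, smul_eq_mul, Complex.re_ofReal_mul]

/-- Strict positivity for `α > 1`, `z > 0`, under the support condition
`supp ρ ⊆ supp σ`: `Q_{α,z}(ρ‖σ) ≥ (Tr ρ)^α (Tr σ)^{1−α}`; equality holds if
`(Tr σ) ρ = (Tr ρ) σ`; and conversely if `z ≥ α/2` and equality holds then
`(Tr σ) ρ = (Tr ρ) σ`. -/
theorem Qaz_strict_positivity_alpha_gt_one (n : ℕ) (α z : ℝ) (hα : 1 < α) (hz : 0 < z)
    (ρ σ : Matrix (Fin n) (Fin n) ℂ) (hρ : ρ.PosSemidef) (hσ : σ.PosSemidef)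
    (hρ0 : ρ ≠ 0) (hσ0 : σ ≠ 0)
    (hsupp : ∀ v : Fin n → ℂ, σ *ᵥ v = 0 → ρ *ᵥ v = 0) :
    (ρ.trace.re) ^ α * (σ.trace.re) ^ (1 - α) ≤ Qaz α z ρ σ ∧
    (σ.trace • ρ = ρ.trace • σ →
      Qaz α z ρ σ = (ρ.trace.re) ^ α * (σ.trace.re) ^ (1 - α)) ∧
    (α / 2 ≤ z → Qaz α z ρ σ = (ρ.trace.re) ^ α * (σ.trace.re) ^ (1 - α) →
      σ.trace • ρ = ρ.trace • σ) := by
  have hta : 0 < ρ.trace := lt_of_le_of_ne hρ.trace_nonneg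
    (fun h => hρ0 (hρ.trace_eq_zero_iff.1 h.symm))
  have htb : 0 < σ.trace := lt_of_le_of_ne hσ.trace_nonneg
    (fun h => hσ0 (hσ.trace_eq_zero_iff.1 h.symm))
  obtain ⟨ha, ha'⟩ := Complex.lt_def.1 hta
  obtain ⟨hb, hb'⟩ := Complex.lt_def.1 htb
  simp only [Complex.zero_re, Complex.zero_im] at ha ha' hb hb'
  have eA : ρ.trace = ((ρ.trace.re : ℝ) : ℂ) := Complex.ext (by simp) (by simp [← ha'])
  have eB : σ.trace = ((σ.trace.re : ℝ) : ℂ) := Complex.ext (by simp) (by simp [← hb'])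
  set a := ρ.trace.re with hadef
  set b := σ.trace.re with hbdef
  have hκ : 0 < a / b := by positivity
  have htr : ρ.trace.re = a / b * σ.trace.re := by
    rw [← hadef, ← hbdef]; field_simp
  have hval : (a / b) ^ (α - 1) * a = a ^ α * b ^ (1 - α) := by
    rw [Real.div_rpow ha.le hb.le, show 1 - α = -(α - 1) by ring, Real.rpow_neg hb.le,
      Real.rpow_sub_one ha.ne']
    field_simp
  obtain ⟨k, hk⟩ := pow_unbounded_of_one_lt (1 / z) (one_lt_two (α := ℝ))
  obtain ⟨h1, h2⟩ := Qaz_ge hα hρ hσ hsupp hκ htr k z hz (by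
    rw [div_lt_iff₀ hz] at hk; exact hk.le)
  rw [← hadef, hval] at h1 h2
  rw [eA, eB]
  have hbC : (b : ℂ) ≠ 0 := by exact_mod_cast hb.ne'
  refine ⟨h1, fun h => ?_, fun _ h => ?_⟩
  · have hρe : ρ = ((a / b : ℝ) : ℂ) • σ := by
      push_cast
      rw [div_eq_inv_mul, ← smul_smul, ← h, smul_smul, inv_mul_cancel₀ hbC, one_smul]
    have h5 := Qaz_smul hz hσ hα hκ
    rw [← hρe] at h5
    rw [h5, ← hbdef, ← hval, Real.rpow_sub_one hκ.ne']
    field_simp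
  · have h5 := h2 h
    rw [h5]
    push_cast
    rw [smul_smul, mul_div_cancel₀ _ hbC]
end

section
/- Let p ≥ 1 be a real number. Let Φ be a ℂ-linear map from m×m complex matrices to n×n complex matrices that is unital (Φ(I) = I) and positive (Φ maps positive semidefinite matrices to positive semidefinite matrices), and let Ψ be its trace-adjoint, i.e., the ℂ-linear map from n×n to m×m complex matrices satisfying Tr(Ψ(A) · B) = Tr(A · Φ(B)) for all n×n matrices A and m×m matrices B. Let σ be an n×n positive semidefinite complex matrix and let b be an m×m positive semidefinite complex matrix whose support is contained in the support of Ψ(σ) (i.e., Ψ(σ)v = 0 implies bv = 0). Then Tr((σ^{1/(2p)} Φ(b) σ^{1/(2p)})^p) ≤ Tr((Ψ(σ)^{1/(2p)} b Ψ(σ)^{1/(2p)})^p). -/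
open Matrix
open scoped ComplexOrder

section
open scoped Matrix.Norms.L2Operator MatrixOrder

lemma ptr_spec {m : Type*} [Fintype m] [DecidableEq m] (U : Matrix m m ℂ)
    (hU : U ∈ unitary (Matrix m m ℂ)) :
    ∃ (S : Finset ℂ) (P : ℂ → Matrix m m ℂ), (∀ l ∈ S, ‖l‖ = 1) ∧ (∀ l ∈ S, (P l).PosSemidef) ∧
      ∑ l ∈ S, P l = 1 ∧ ∑ l ∈ S, l • P l = U := by
  classical
  have hfin := Matrix.finite_spectrum (R := ℂ) U
  have hN : IsStarNormal U := by
    constructor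
    have := Unitary.mem_iff.1 hU
    rw [Commute, SemiconjBy, this.1, this.2]
  have hc : ∀ f : ℂ → ℂ, ContinuousOn f (spectrum ℂ U) := fun f => hfin.continuousOn f
  refine ⟨hfin.toFinset, fun l => cfc (fun x : ℂ => if x = l then (1 : ℂ) else 0) U, ?_, ?_, ?_, ?_⟩
  · intro l hl
    have := spectrum.subset_circle_of_unitary hU (hfin.mem_toFinset.1 hl)
    simpa using this
  · intro l hl
    have : cfc (fun x : ℂ => if x = l then (1 : ℂ) else 0) U =
      (cfc (fun x : ℂ => if x = l then (1 : ℂ) else 0) U)ᴴ *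
       cfc (fun x : ℂ => if x = l then (1 : ℂ) else 0) U := by
      rw [← star_eq_conjTranspose, ← cfc_star, ← cfc_mul _ _ U (hc _) (hc _)]
      congr 1
      ext x
      split_ifs <;> simp
    beta_reduce
    rw [this]
    exact posSemidef_conjTranspose_mul_self _
  · rw [← cfc_sum _ _ _ (fun i _ => hc _)]
    conv_rhs => rw [← cfc_one (R := ℂ) U hN]
    apply cfc_congr
    intro x hx
    simp [hx]
  · have : ∀ l, l • cfc (fun x : ℂ => if x = l then (1 : ℂ) else 0) U =
        cfc (fun x : ℂ => l • if x = l then (1 : ℂ) else 0) U := fun l => by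
      rw [cfc_smul _ _ _ (hc _)]
    simp only [this]
    rw [← cfc_sum _ _ _ (fun i _ => hc _)]
    conv_rhs => rw [← cfc_id (R := ℂ) U hN]
    apply cfc_congr
    intro x hx
    simp [hx]

lemma ptr_russo_dye {m n : Type*} [Fintype m] [DecidableEq m] [Fintype n] [DecidableEq n]
    (Φ : Matrix m m ℂ →ₗ[ℂ] Matrix n n ℂ) (h1 : Φ 1 = 1)
    (hpos : ∀ B : Matrix m m ℂ, B.PosSemidef → (Φ B).PosSemidef)
    (U : Matrix m m ℂ) (hU : U ∈ unitary (Matrix m m ℂ)) : ‖Φ U‖ ≤ 1 := by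
  obtain ⟨S, P, hS, hP, hP1, hPU⟩ := ptr_spec U hU
  have e1 : ∑ l ∈ S, Φ (P l) = 1 := by rw [← map_sum, hP1, h1]
  have e2 : ∑ l ∈ S, l • Φ (P l) = Φ U := by
    rw [← hPU, map_sum]; simp
  have e3 : ∑ l ∈ S, (star l) • Φ (P l) = (Φ U)ᴴ := by
    rw [← e2, conjTranspose_sum]
    refine Finset.sum_congr rfl fun l hl => ?_
    rw [conjTranspose_smul, (hpos _ (hP l hl)).1]
  have key : 1 - (Φ U)ᴴ * Φ U = ∑ l ∈ S, (Φ U - l • 1)ᴴ * Φ (P l) * (Φ U - l • 1) := by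
    have : ∀ l ∈ S, (Φ U - l • 1)ᴴ * Φ (P l) * (Φ U - l • 1) =
       (Φ U)ᴴ * Φ (P l) * Φ U - (Φ U)ᴴ * (l • Φ (P l)) - (star l • Φ (P l)) * Φ U + Φ (P l) := by
      intro l hl
      have hl2 : l * star l = 1 := by
        have := Complex.mul_conj l
        rw [Complex.normSq_eq_norm_sq, hS l hl] at this
        simpa using this
      simp only [conjTranspose_sub, conjTranspose_smul, conjTranspose_one, sub_mul, mul_sub, smul_mul_assoc,
        mul_smul_comm, one_mul, mul_one, smul_sub, smul_smul, hl2, one_smul]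
      abel
    rw [Finset.sum_congr rfl this, Finset.sum_add_distrib, Finset.sum_sub_distrib,
      Finset.sum_sub_distrib, ← Finset.sum_mul, ← Finset.mul_sum, ← Finset.mul_sum, ← Finset.sum_mul,
      e1, e2, e3]
    simp only [mul_one]
    abel
  have h2 : (1 - (Φ U)ᴴ * Φ U).PosSemidef := by
    rw [key]
    exact posSemidef_sum _ fun l hl => (hpos _ (hP l hl)).conjTranspose_mul_mul_same _
  have h3 : (Φ U)ᴴ * Φ U ≤ 1 := by rw [Matrix.le_iff]; exact h2
  have h4 : (0 : Matrix n n ℂ) ≤ (Φ U)ᴴ * Φ U := by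
    rw [Matrix.nonneg_iff_posSemidef]; exact posSemidef_conjTranspose_mul_self _
  have h5 := (CStarAlgebra.norm_le_one_iff_of_nonneg _ h4).2 h3
  rw [l2_opNorm_conjTranspose_mul_self] at h5
  nlinarith [norm_nonneg (Φ U)]

lemma ptr_diag_le {n : Type*} [Fintype n] [DecidableEq n] (C : Matrix n n ℂ) (i : n) :
    ‖C i i‖ ≤ ‖C‖ := by
  have h := l2_opNorm_mulVec C (EuclideanSpace.single i (1:ℂ))
  simp only [PiLp.norm_single, norm_one, mul_one] at h
  refine le_trans ?_ h
  have := PiLp.norm_apply_le ((EuclideanSpace.equiv n ℂ).symm (C *ᵥ (EuclideanSpace.single i (1:ℂ)))) i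
  simpa using this

/-- complex power of a Hermitian matrix with positive eigenvalues -/
noncomputable def ptrE {n : Type*} [Fintype n] [DecidableEq n]
    (A : Matrix n n ℂ) (hA : A.IsHermitian) (z : ℂ) : Matrix n n ℂ :=
  (hA.eigenvectorUnitary : Matrix n n ℂ) *
      Matrix.diagonal (fun i => Complex.exp (z * Real.log (hA.eigenvalues i))) *
      star (hA.eigenvectorUnitary : Matrix n n ℂ)

section
variable {n : Type*} [Fintype n] [DecidableEq n] {A : Matrix n n ℂ} (hA : A.IsHermitian)

lemma ptrE_mul (z w : ℂ) : ptrE A hA z * ptrE A hA w = ptrE A hA (z + w) := by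
  unfold ptrE
  have h : star (hA.eigenvectorUnitary : Matrix n n ℂ) * (hA.eigenvectorUnitary : Matrix n n ℂ) = 1 :=
    Unitary.coe_star_mul_self _
  calc _ = (hA.eigenvectorUnitary : Matrix n n ℂ) *
      (Matrix.diagonal (fun i => Complex.exp (z * Real.log (hA.eigenvalues i))) *
      (star (hA.eigenvectorUnitary : Matrix n n ℂ) * (hA.eigenvectorUnitary : Matrix n n ℂ)) *
      Matrix.diagonal (fun i => Complex.exp (w * Real.log (hA.eigenvalues i)))) *
      star (hA.eigenvectorUnitary : Matrix n n ℂ) := by simp only [mul_assoc]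
    _ = _ := by rw [h, mul_one, diagonal_mul_diagonal]; simp only [add_mul, Complex.exp_add]

lemma ptrE_zero : ptrE A hA 0 = 1 := by
  simp [ptrE]

lemma ptrE_star (z : ℂ) : star (ptrE A hA z) = ptrE A hA (star z) := by
  simp only [ptrE, star_mul, star_star, mul_assoc]
  rw [star_eq_conjTranspose (diagonal _), diagonal_conjTranspose]
  congr 3
  ext i
  simp [← Complex.exp_conj]

lemma ptrE_unitary (t : ℝ) : ptrE A hA (t * Complex.I) ∈ unitary (Matrix n n ℂ) := by
  rw [Unitary.mem_iff, ptrE_star, ptrE_mul, ptrE_mul]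
  simp [ptrE_zero]

lemma ptrE_mpow (hp : A.PosDef) (t : ℝ) : mpow A t = ptrE A hA t := by
  rw [mpow, dif_pos hA, ptrE]
  congr 3
  ext i
  rw [Real.rpow_def_of_pos (hp.eigenvalues_pos i)]
  push_cast
  rw [mul_comm]

lemma ptrE_one (hp : A.PosDef) : ptrE A hA 1 = A := by
  conv_rhs => rw [hA.spectral_theorem, Unitary.conjStarAlgAut_apply]
  rw [ptrE]
  congr 3
  ext i
  rw [one_mul, ← Complex.ofReal_exp, Real.exp_log (hp.eigenvalues_pos i)]
  rfl

lemma ptrE_herm (t : ℝ) : (ptrE A hA t).IsHermitian := by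
  rw [IsHermitian, ← star_eq_conjTranspose, ptrE_star]; simp

lemma ptrE_posDef (t : ℝ) : (ptrE A hA t).PosDef := by
  have h : (ptrE A hA t) = (ptrE A hA (t/2 : ℝ))ᴴ * ptrE A hA (t/2 : ℝ) := by
    rw [(ptrE_herm hA (t/2)).eq, ptrE_mul]; congr 1; push_cast; ring
  have hps : (ptrE A hA t).PosSemidef := by rw [h]; exact posSemidef_conjTranspose_mul_self _
  rw [hps.posDef_iff_isUnit]
  exact IsUnit.of_mul_eq_one (ptrE A hA (-t)) (by rw [ptrE_mul]; simp [ptrE_zero])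

lemma ptrE_norm_le (z : ℂ) (R : ℝ) (hz : |z.re| ≤ R) :
    ‖ptrE A hA z‖ ≤ Real.exp (R * ∑ i, |Real.log (hA.eigenvalues i)|) := by
  unfold ptrE
  rw [← Unitary.coe_star, CStarRing.norm_mul_coe_unitary, CStarRing.norm_coe_unitary_mul,
    l2_opNorm_diagonal, pi_norm_le_iff_of_nonneg (Real.exp_pos _).le]
  intro i
  rw [Complex.norm_exp, Real.exp_le_exp, Complex.re_mul_ofReal]
  have hR : 0 ≤ R := (abs_nonneg _).trans hz
  have h2 := Finset.single_le_sum (f := fun i => |Real.log (hA.eigenvalues i)|)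
    (fun i _ => abs_nonneg _) (Finset.mem_univ i)
  calc _ ≤ |z.re * Real.log (hA.eigenvalues i)| := le_abs_self _
    _ = |z.re| * |Real.log (hA.eigenvalues i)| := abs_mul _ _
    _ ≤ _ := mul_le_mul hz h2 (abs_nonneg _) hR

lemma ptrE_diff : Differentiable ℂ (ptrE A hA) := by
  unfold ptrE
  refine (Differentiable.mul (differentiable_const _) ?_).mul (differentiable_const _)
  have : (fun z : ℂ => diagonal (fun i => Complex.exp (z * Real.log (hA.eigenvalues i)))) =
    fun z => ∑ i, Complex.exp (z * Real.log (hA.eigenvalues i)) • (Matrix.single i i 1 : Matrix n n ℂ) := by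
    ext z : 1
    rw [← Matrix.sum_single_eq_diagonal]
    simp
  rw [this]
  fun_prop

lemma ptr_trace_le (t : ℝ) (C : Matrix n n ℂ) (hC : ‖C‖ ≤ 1) :
    ‖(ptrE A hA t * C).trace‖ ≤ (ptrE A hA t).trace.re := by
  set V := hA.eigenvectorUnitary with hV
  have hre : ∀ i, Complex.exp ((t:ℂ) * Real.log (hA.eigenvalues i)) =
      ((Real.exp (t * Real.log (hA.eigenvalues i)) : ℝ) : ℂ) := fun i => by push_cast; rfl
  have e1 : (ptrE A hA t * C).trace = ∑ i, ((Real.exp (t * Real.log (hA.eigenvalues i)) : ℝ) : ℂ) *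
      (star (V : Matrix n n ℂ) * C * (V : Matrix n n ℂ)) i i := by
    unfold ptrE
    rw [mul_assoc, mul_assoc, Matrix.trace_mul_comm, mul_assoc]
    simp only [trace, diag_apply, diagonal_mul, hre, hV]
  have e2 : (ptrE A hA t).trace = ∑ i, ((Real.exp (t * Real.log (hA.eigenvalues i)) : ℝ) : ℂ) := by
    unfold ptrE
    rw [mul_assoc, Matrix.trace_mul_comm, mul_assoc, Unitary.coe_star_mul_self, mul_one]
    simp only [trace, diag_apply, diagonal_apply_eq, hre]
  have hn : ‖star (V : Matrix n n ℂ) * C * (V : Matrix n n ℂ)‖ ≤ 1 := by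
    rwa [← Unitary.coe_star, CStarRing.norm_mul_coe_unitary, CStarRing.norm_coe_unitary_mul]
  rw [e1, e2, ← Complex.ofReal_sum, Complex.ofReal_re]
  refine (norm_sum_le _ _).trans (Finset.sum_le_sum fun i _ => ?_)
  rw [norm_mul, Complex.norm_real, Real.norm_of_nonneg (Real.exp_pos _).le]
  exact mul_le_of_le_one_right (Real.exp_pos _).le ((ptr_diag_le _ i).trans hn)
end

lemma ptr_norm_unitary {n : Type*} [Fintype n] [DecidableEq n] (U : Matrix n n ℂ)
    (hU : U ∈ unitary (Matrix n n ℂ)) : ‖U‖ ≤ 1 :=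
  ptr_russo_dye LinearMap.id rfl (fun _ h => h) U hU

lemma ptr_psd_of_quad {n : Type*} [Fintype n] [DecidableEq n] (M : Matrix n n ℂ)
    (h : ∀ v : n → ℂ, 0 ≤ star v ⬝ᵥ (M *ᵥ v)) : M.PosSemidef := by
  rw [← Matrix.isPositive_toEuclideanLin_iff, LinearMap.isPositive_iff_complex]
  intro x
  have h1 := h x.ofLp
  have h2 : inner ℂ (M.toEuclideanLin x) x = star (star x.ofLp ⬝ᵥ (M *ᵥ x.ofLp)) := by
    rw [EuclideanSpace.inner_eq_star_dotProduct, ← Matrix.star_dotProduct_star, star_star,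
      dotProduct_comm]
    rfl
  rw [h2]
  rw [Complex.le_def] at h1
  simp only [Complex.zero_re, Complex.zero_im] at h1
  refine ⟨?_, ?_⟩
  · apply Complex.ext <;> simp [← h1.2]
  · simpa using h1.1

lemma ptr_trace_mul_nonneg {n : Type*} [Fintype n] [DecidableEq n] (M N : Matrix n n ℂ)
    (hM : M.PosSemidef) (hN : N.PosSemidef) : 0 ≤ (M * N).trace := by
  obtain ⟨C, rfl⟩ := CStarAlgebra.nonneg_iff_eq_star_mul_self.1 (Matrix.nonneg_iff_posSemidef.2 hM)
  rw [mul_assoc, Matrix.trace_mul_comm]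
  exact (hN.mul_mul_conjTranspose_same C).trace_nonneg

section
variable {n m : Type*} [Fintype n] [DecidableEq n] [Fintype m] [DecidableEq m]
    (Φ : Matrix m m ℂ →ₗ[ℂ] Matrix n n ℂ)
    (Ψ : Matrix n n ℂ →ₗ[ℂ] Matrix m m ℂ)

lemma ptr_adj_pos
    (hΦpos : ∀ B : Matrix m m ℂ, B.PosSemidef → (Φ B).PosSemidef)
    (hΨ : ∀ (A : Matrix n n ℂ) (B : Matrix m m ℂ), (Ψ A * B).trace = (A * Φ B).trace)
    (A : Matrix n n ℂ) (hA : A.PosSemidef) : (Ψ A).PosSemidef := by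
  refine ptr_psd_of_quad _ fun v => ?_
  have h := ptr_trace_mul_nonneg _ _ hA (hΦpos _ (posSemidef_vecMulVec_self_star v))
  rw [← hΨ, mul_vecMulVec, trace_vecMulVec, dotProduct_comm] at h
  exact h

lemma ptr_conj_posDef (A : Matrix n n ℂ) (hA : A.IsHermitian) (s : ℝ) (b : Matrix n n ℂ)
    (hb : b.PosDef) : (ptrE A hA s * b * ptrE A hA s).PosDef := by
  have hu : IsUnit (ptrE A hA s) := (ptrE_posDef hA s).isUnit
  have := (Matrix.IsUnit.posDef_star_left_conjugate_iff (x := b) hu).2 hb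
  rwa [ptrE_star, Complex.star_def, Complex.conj_ofReal] at this

lemma ptr_cycle (K V P R W : Matrix n n ℂ) :
    (K * (V * (P * R) * W)).trace = (P * (R * W * K * V)).trace := by
  calc _ = ((K * V) * (P * R * W)).trace := by simp only [mul_assoc]
    _ = _ := by rw [Matrix.trace_mul_comm]; simp only [mul_assoc]

lemma ptr_cycle2 (K V P : Matrix n n ℂ) :
    (K * (V * P * V)).trace = (V * K * V * P).trace := by
  calc _ = ((K * V * P) * V).trace := by simp only [mul_assoc]
    _ = _ := by rw [Matrix.trace_mul_comm]; simp only [mul_assoc]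

lemma ptr_norm4 (R W K V : Matrix n n ℂ) (h1 : ‖R‖ ≤ 1) (h2 : ‖W‖ ≤ 1) (h3 : ‖K‖ ≤ 1)
    (h4 : ‖V‖ ≤ 1) : ‖R * W * K * V‖ ≤ 1 := by
  have a1 : ‖R * W‖ ≤ 1 := (norm_mul_le _ _).trans (mul_le_one₀ h1 (norm_nonneg _) h2)
  have a2 : ‖R * W * K‖ ≤ 1 := (norm_mul_le _ _).trans (mul_le_one₀ a1 (norm_nonneg _) h3)
  exact (norm_mul_le _ _).trans (mul_le_one₀ a2 (norm_nonneg _) h4)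

/-- the interpolating function -/
noncomputable def ptrF (ω B : Matrix m m ℂ) (σ A : Matrix n n ℂ) (hω : ω.IsHermitian)
    (hB : B.IsHermitian) (hσ : σ.IsHermitian) (hA : A.IsHermitian) (p : ℝ) (z : ℂ) : ℂ :=
  (Φ (ptrE ω hω (-z / 2) * ptrE B hB (p * z) * ptrE ω hω (-z / 2)) *
    (ptrE σ hσ (z / 2) * ptrE A hA (p * (1 - z)) * ptrE σ hσ (z / 2))).trace

lemma ptrF_diff (ω B : Matrix m m ℂ) (σ A : Matrix n n ℂ) (hω : ω.IsHermitian)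
    (hB : B.IsHermitian) (hσ : σ.IsHermitian) (hA : A.IsHermitian) (p : ℝ) :
    Differentiable ℂ (ptrF Φ ω B σ A hω hB hσ hA p) := by
  have d1 : Differentiable ℂ fun z : ℂ => ptrE ω hω (-z / 2) := (ptrE_diff hω).comp (by fun_prop)
  have d2 : Differentiable ℂ fun z : ℂ => ptrE B hB (p * z) := (ptrE_diff hB).comp (by fun_prop)
  have d3 : Differentiable ℂ fun z : ℂ => ptrE σ hσ (z / 2) := (ptrE_diff hσ).comp (by fun_prop)
  have d4 : Differentiable ℂ fun z : ℂ => ptrE A hA (p * (1 - z)) :=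
    (ptrE_diff hA).comp (by fun_prop)
  have d5 := (LinearMap.toContinuousLinearMap Φ).differentiable.comp ((d1.mul d2).mul d1)
  exact (LinearMap.toContinuousLinearMap (Matrix.traceLinearMap n ℂ ℂ)).differentiable.comp
    (d5.mul ((d3.mul d4).mul d3))

lemma ptr_norm3_le {a b : Matrix n n ℂ} {x y : ℝ} (ha : ‖a‖ ≤ x) (hb : ‖b‖ ≤ y) :
    ‖a * b * a‖ ≤ x * y * x := by
  have hx := (norm_nonneg _).trans ha
  have hy := (norm_nonneg _).trans hb
  calc _ ≤ ‖a * b‖ * ‖a‖ := norm_mul_le _ _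
    _ ≤ (‖a‖ * ‖b‖) * ‖a‖ := by gcongr; exact norm_mul_le _ _
    _ ≤ _ := by gcongr

lemma ptrF_bdd (ω B : Matrix m m ℂ) (σ A : Matrix n n ℂ) (hω : ω.IsHermitian)
    (hB : B.IsHermitian) (hσ : σ.IsHermitian) (hA : A.IsHermitian) (p : ℝ) (hp : 1 ≤ p) :
    BddAbove ((norm ∘ ptrF Φ ω B σ A hω hB hσ hA p) ''
      Complex.HadamardThreeLines.verticalClosedStrip 0 1) := by
  set TC := LinearMap.toContinuousLinearMap (Matrix.traceLinearMap n ℂ ℂ)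
  set PC := LinearMap.toContinuousLinearMap Φ
  set c1 := Real.exp (p * ∑ i, |Real.log (hω.eigenvalues i)|)
  set c2 := Real.exp (p * ∑ i, |Real.log (hB.eigenvalues i)|)
  set c3 := Real.exp (p * ∑ i, |Real.log (hσ.eigenvalues i)|)
  set c4 := Real.exp (p * ∑ i, |Real.log (hA.eigenvalues i)|)
  refine ⟨‖TC‖ * ((‖PC‖ * (c1 * c2 * c1)) * (c3 * c4 * c3)), ?_⟩
  rintro _ ⟨z, hz, rfl⟩
  have hz' : 0 ≤ z.re ∧ z.re ≤ 1 := hz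
  have b1 : ‖ptrE ω hω (-z / 2)‖ ≤ c1 := ptrE_norm_le _ _ _ (by
    simp [abs_le]; constructor <;> linarith)
  have b2 : ‖ptrE B hB (p * z)‖ ≤ c2 := ptrE_norm_le _ _ _ (by
    rw [Complex.re_ofReal_mul, abs_le]; constructor <;> nlinarith)
  have b3 : ‖ptrE σ hσ (z / 2)‖ ≤ c3 := ptrE_norm_le _ _ _ (by
    simp [abs_le]; constructor <;> linarith)
  have b4 : ‖ptrE A hA (p * (1 - z))‖ ≤ c4 := ptrE_norm_le _ _ _ (by
    rw [Complex.re_ofReal_mul, Complex.sub_re, Complex.one_re, abs_le]; constructor <;> nlinarith)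
  have b12 := ptr_norm3_le b1 b2
  have b34 := ptr_norm3_le b3 b4
  refine (TC.le_opNorm _).trans ?_
  gcongr
  refine (norm_mul_le _ _).trans ?_
  gcongr
  refine (PC.le_opNorm _).trans ?_
  gcongr

lemma ptrF_bound0
    (hΦ1 : Φ 1 = 1)
    (hΦpos : ∀ B : Matrix m m ℂ, B.PosSemidef → (Φ B).PosSemidef)
    (ω B : Matrix m m ℂ) (σ A : Matrix n n ℂ) (hω : ω.IsHermitian)
    (hB : B.IsHermitian) (hσ : σ.IsHermitian) (hA : A.IsHermitian) (p : ℝ) (t : ℝ) :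
    ‖ptrF Φ ω B σ A hω hB hσ hA p (t * Complex.I)‖ ≤ (ptrE A hA p).trace.re := by
  unfold ptrF
  have e1 : ptrE A hA (p * (1 - t * Complex.I)) = ptrE A hA p * ptrE A hA ((-(p * t) : ℝ) * Complex.I) := by
    rw [ptrE_mul]; congr 1; push_cast; ring
  have e2 : -(t * Complex.I) / 2 = ((-t/2 : ℝ) : ℂ) * Complex.I := by push_cast; ring
  have e3 : (t * Complex.I) / 2 = ((t/2 : ℝ) : ℂ) * Complex.I := by push_cast; ring
  have e4 : (p : ℂ) * (t * Complex.I) = ((p * t : ℝ) : ℂ) * Complex.I := by push_cast; ring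
  rw [e1, e2, e3, e4, ptr_cycle]
  refine ptr_trace_le hA p _ (ptr_norm4 _ _ _ _ ?_ ?_ ?_ ?_)
  · exact ptr_norm_unitary _ (ptrE_unitary _ _)
  · exact ptr_norm_unitary _ (ptrE_unitary _ _)
  · exact ptr_russo_dye Φ hΦ1 hΦpos _ (mul_mem (mul_mem (ptrE_unitary _ _) (ptrE_unitary _ _))
      (ptrE_unitary _ _))
  · exact ptr_norm_unitary _ (ptrE_unitary _ _)

/-- the Petz recovery map -/
noncomputable def ptrPetz (σ : Matrix n n ℂ) (ω : Matrix m m ℂ) (hσ : σ.IsHermitian)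
    (hω : ω.IsHermitian) : Matrix n n ℂ →ₗ[ℂ] Matrix m m ℂ :=
  LinearMap.mulRight ℂ (ptrE ω hω ((-1/2 : ℝ) : ℂ)) ∘ₗ
  LinearMap.mulLeft ℂ (ptrE ω hω ((-1/2 : ℝ) : ℂ)) ∘ₗ Ψ ∘ₗ
  LinearMap.mulRight ℂ (ptrE σ hσ ((1/2 : ℝ) : ℂ)) ∘ₗ
  LinearMap.mulLeft ℂ (ptrE σ hσ ((1/2 : ℝ) : ℂ))

lemma ptrF_bound1
    (hΦpos : ∀ B : Matrix m m ℂ, B.PosSemidef → (Φ B).PosSemidef)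
    (hΨ : ∀ (A : Matrix n n ℂ) (B : Matrix m m ℂ), (Ψ A * B).trace = (A * Φ B).trace)
    (B : Matrix m m ℂ) (σ A : Matrix n n ℂ) (hσp : σ.PosDef) (hωp : (Ψ σ).PosDef)
    (hω : (Ψ σ).IsHermitian)
    (hB : B.IsHermitian) (hσ : σ.IsHermitian) (hA : A.IsHermitian) (p : ℝ) (t : ℝ) :
    ‖ptrF Φ (Ψ σ) B σ A hω hB hσ hA p (1 + t * Complex.I)‖ ≤ (ptrE B hB p).trace.re := by
  unfold ptrF
  set ω := Ψ σ with hωd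
  have e1 : ptrE A hA (p * (1 - (1 + t * Complex.I))) = ptrE A hA ((-(p * t) : ℝ) * Complex.I) := by
    congr 1; push_cast; ring
  have e2 : ptrE ω hω (-(1 + t * Complex.I) / 2) =
      ptrE ω hω ((-1/2 : ℝ) : ℂ) * ptrE ω hω (((-t/2 : ℝ) : ℂ) * Complex.I) := by
    rw [ptrE_mul]; congr 1; push_cast; ring
  have e2' : ptrE ω hω (-(1 + t * Complex.I) / 2) =
      ptrE ω hω (((-t/2 : ℝ) : ℂ) * Complex.I) * ptrE ω hω ((-1/2 : ℝ) : ℂ) := by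
    rw [ptrE_mul]; congr 1; push_cast; ring
  have e3 : ptrE σ hσ ((1 + t * Complex.I) / 2) =
      ptrE σ hσ ((1/2 : ℝ) : ℂ) * ptrE σ hσ (((t/2 : ℝ) : ℂ) * Complex.I) := by
    rw [ptrE_mul]; congr 1; push_cast; ring
  have e3' : ptrE σ hσ ((1 + t * Complex.I) / 2) =
      ptrE σ hσ (((t/2 : ℝ) : ℂ) * Complex.I) * ptrE σ hσ ((1/2 : ℝ) : ℂ) := by
    rw [ptrE_mul]; congr 1; push_cast; ring
  have e4 : ptrE B hB (p * (1 + t * Complex.I)) =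
      ptrE B hB p * ptrE B hB (((p * t : ℝ) : ℂ) * Complex.I) := by
    rw [ptrE_mul]; congr 1; push_cast; ring
  set W := ptrE σ hσ (((t/2 : ℝ) : ℂ) * Complex.I) * ptrE A hA ((-(p * t) : ℝ) * Complex.I) *
    ptrE σ hσ (((t/2 : ℝ) : ℂ) * Complex.I) with hW
  have hWu : W ∈ unitary _ := mul_mem (mul_mem (ptrE_unitary _ _) (ptrE_unitary _ _))
      (ptrE_unitary _ _)
  have hY : ptrE σ hσ ((1 + t * Complex.I) / 2) * ptrE A hA (p * (1 - (1 + t * Complex.I))) *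
      ptrE σ hσ ((1 + t * Complex.I) / 2) =
      ptrE σ hσ ((1/2 : ℝ) : ℂ) * W * ptrE σ hσ ((1/2 : ℝ) : ℂ) := by
    rw [e1]; nth_rewrite 1 [e3]; rw [e3', hW]; simp only [mul_assoc]
  have hX : ptrE ω hω (-(1 + t * Complex.I) / 2) * ptrE B hB (p * (1 + t * Complex.I)) *
      ptrE ω hω (-(1 + t * Complex.I) / 2) = ptrE ω hω ((-1/2 : ℝ) : ℂ) *
        (ptrE ω hω (((-t/2 : ℝ) : ℂ) * Complex.I) *
        (ptrE B hB p * ptrE B hB (((p * t : ℝ) : ℂ) * Complex.I)) *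
        ptrE ω hω (((-t/2 : ℝ) : ℂ) * Complex.I)) * ptrE ω hω ((-1/2 : ℝ) : ℂ) := by
    nth_rewrite 1 [e2]; rw [e2', e4]; simp only [mul_assoc]
  rw [hX, hY, Matrix.trace_mul_comm, ← hΨ, ← mul_assoc (Ψ _), Matrix.trace_mul_comm,
    ← mul_assoc, ← mul_assoc, ptr_cycle]
  refine ptr_trace_le hB p _ (ptr_norm4 _ _ _ _ ?_ ?_ ?_ ?_)
  · exact ptr_norm_unitary _ (ptrE_unitary _ _)
  · exact ptr_norm_unitary _ (ptrE_unitary _ _)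
  · refine ptr_russo_dye (ptrPetz Ψ σ ω hσ hω) ?_ ?_ W hWu
    · have : ptrE σ hσ ((1/2 : ℝ) : ℂ) * ptrE σ hσ ((1/2 : ℝ) : ℂ) = σ := by
        rw [ptrE_mul]; nth_rewrite 2 [← ptrE_one hσ hσp]; congr 1; push_cast; ring
      simp only [ptrPetz, LinearMap.comp_apply, LinearMap.mulLeft_apply, LinearMap.mulRight_apply,
        mul_one, this]
      rw [← hωd]
      nth_rewrite 2 [← ptrE_one hω hωp]
      rw [ptrE_mul, ptrE_mul, ← ptrE_zero hω]; congr 1; push_cast; ring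
    · intro X hX
      simp only [ptrPetz, LinearMap.comp_apply, LinearMap.mulLeft_apply, LinearMap.mulRight_apply]
      have h1 := hX.conjTranspose_mul_mul_same (ptrE σ hσ ((1/2 : ℝ) : ℂ))
      rw [(ptrE_herm hσ _).eq] at h1
      have h2 := (ptr_adj_pos Φ Ψ hΦpos hΨ _ h1).conjTranspose_mul_mul_same
        (ptrE ω hω ((-1/2 : ℝ) : ℂ))
      rwa [(ptrE_herm hω _).eq] at h2
  · exact ptr_norm_unitary _ (ptrE_unitary _ _)

lemma ptr_main
    (hΦ1 : Φ 1 = 1)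
    (hΦpos : ∀ B : Matrix m m ℂ, B.PosSemidef → (Φ B).PosSemidef)
    (hΨ : ∀ (A : Matrix n n ℂ) (B : Matrix m m ℂ), (Ψ A * B).trace = (A * Φ B).trace)
    (p : ℝ) (hp : 1 ≤ p) (σ : Matrix n n ℂ) (hσ : σ.PosDef) (hω : (Ψ σ).PosDef)
    (b : Matrix m m ℂ) (hb : b.PosDef) (hΦb : (Φ b).PosDef) :
    ((mpow (mpow σ (1 / (2 * p)) * Φ b * mpow σ (1 / (2 * p))) p).trace).re
      ≤ ((mpow (mpow (Ψ σ) (1 / (2 * p)) * b * mpow (Ψ σ) (1 / (2 * p))) p).trace).re := by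
  have hp0 : (p : ℂ) ≠ 0 := by
    have : p ≠ 0 := by positivity
    exact_mod_cast this
  rw [ptrE_mpow hσ.1 hσ, ptrE_mpow hω.1 hω]
  set A := ptrE σ hσ.1 ((1 / (2 * p) : ℝ) : ℂ) * Φ b * ptrE σ hσ.1 ((1 / (2 * p) : ℝ) : ℂ) with hAd
  set B := ptrE (Ψ σ) hω.1 ((1 / (2 * p) : ℝ) : ℂ) * b * ptrE (Ψ σ) hω.1 ((1 / (2 * p) : ℝ) : ℂ)
    with hBd
  have hA : A.PosDef := ptr_conj_posDef _ _ _ _ hΦb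
  have hB : B.PosDef := ptr_conj_posDef _ _ _ _ hb
  rw [ptrE_mpow hA.1 hA, ptrE_mpow hB.1 hB]
  have key := Complex.HadamardThreeLines.norm_le_interp_of_mem_verticalClosedStrip'
    (f := ptrF Φ (Ψ σ) B σ A hω.1 hB.1 hσ.1 hA.1 p) (z := ((1 / p : ℝ) : ℂ))
    (a := (ptrE A hA.1 p).trace.re) (b := (ptrE B hB.1 p).trace.re) (l := 0) (u := 1) zero_lt_one
    (by
      change 0 ≤ _ ∧ _ ≤ 1
      rw [Complex.ofReal_re]
      exact ⟨by positivity, by rw [div_le_one (by positivity)]; exact hp⟩)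
    (ptrF_diff Φ _ _ _ _ _ _ _ _ _).diffContOnCl (ptrF_bdd Φ _ _ _ _ _ _ _ _ _ hp)
    (by
      intro z hz
      have : z = z.im * Complex.I := by
        have : z.re = 0 := hz
        apply Complex.ext <;> simp [this]
      rw [this]
      exact ptrF_bound0 Φ hΦ1 hΦpos _ _ _ _ _ _ _ _ _ _)
    (by
      intro z hz
      have : z = 1 + z.im * Complex.I := by
        have : z.re = 1 := hz
        apply Complex.ext <;> simp [this]
      rw [this]
      exact ptrF_bound1 Φ Ψ hΦpos hΨ _ _ _ hσ hω _ _ _ _ _ _)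
  have hval : ptrF Φ (Ψ σ) B σ A hω.1 hB.1 hσ.1 hA.1 p ((1 / p : ℝ) : ℂ) = (ptrE A hA.1 p).trace := by
    unfold ptrF
    have e1 : -(((1 / p : ℝ) : ℂ)) / 2 = ((-(1 / (2 * p)) : ℝ) : ℂ) := by
      push_cast; field_simp
    have e2 : (((1 / p : ℝ) : ℂ)) / 2 = (((1 / (2 * p)) : ℝ) : ℂ) := by
      push_cast; field_simp
    have e3 : (p : ℂ) * (((1 / p : ℝ) : ℂ)) = 1 := by
      push_cast; field_simp
    have e4 : (p : ℂ) * (1 - ((1 / p : ℝ) : ℂ)) = p - 1 := by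
      push_cast; field_simp
    rw [e1, e2, e3, e4, ptrE_one hB.1 hB]
    have e5 : ptrE (Ψ σ) hω.1 ((-(1 / (2 * p)) : ℝ) : ℂ) * B *
        ptrE (Ψ σ) hω.1 ((-(1 / (2 * p)) : ℝ) : ℂ) = b := by
      have i1 : ptrE (Ψ σ) hω.1 ((-(1 / (2 * p)) : ℝ) : ℂ) *
          ptrE (Ψ σ) hω.1 ((1 / (2 * p) : ℝ) : ℂ) = 1 := by
        rw [ptrE_mul, ← ptrE_zero hω.1]; congr 1; push_cast; ring
      have i2 : ptrE (Ψ σ) hω.1 ((1 / (2 * p) : ℝ) : ℂ) *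
          ptrE (Ψ σ) hω.1 ((-(1 / (2 * p)) : ℝ) : ℂ) = 1 := by
        rw [ptrE_mul, ← ptrE_zero hω.1]; congr 1; push_cast; ring
      rw [hBd, ← mul_assoc, ← mul_assoc, i1, one_mul, mul_assoc, i2, mul_one]
    rw [e5]
    calc _ = (A * ptrE A hA.1 (p - 1)).trace := ptr_cycle2 _ _ _
      _ = _ := by
          have h1 : A * ptrE A hA.1 (p - 1) = ptrE A hA.1 1 * ptrE A hA.1 (p - 1) := by
            rw [ptrE_one hA.1 hA]
          rw [h1, ptrE_mul]; congr 2; ring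
  rw [hval] at key
  set T := (ptrE A hA.1 p).trace.re
  set S := (ptrE B hB.1 p).trace.re
  have hT : 0 ≤ T := (Complex.le_def.1 (ptrE_posDef hA.1 p).posSemidef.trace_nonneg).1
  have hS : 0 ≤ S := (Complex.le_def.1 (ptrE_posDef hB.1 p).posSemidef.trace_nonneg).1
  have key2 : T ≤ T ^ (1 - 1 / p) * S ^ (1 / p) := by
    refine (Complex.re_le_norm _).trans (key.trans (le_of_eq ?_))
    simp only [Complex.ofReal_re, sub_zero, div_one]
  rcases hT.eq_or_lt with h0 | h0
  · rw [← h0]; exact hS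
  · have h1 : T ^ (1 - 1 / p) * T ^ (1 / p) ≤ T ^ (1 - 1 / p) * S ^ (1 / p) := by
      rw [← Real.rpow_add h0]; simpa using key2
    have h2 := le_of_mul_le_mul_left h1 (Real.rpow_pos_of_pos h0 _)
    exact (Real.rpow_le_rpow_iff hT hS (by positivity)).1 h2
end

lemma ptr_mpow_cfc {n : Type*} [Fintype n] [DecidableEq n] (A : Matrix n n ℂ) (hA : A.IsHermitian)
    (t : ℝ) : mpow A t = cfc (fun x : ℝ => x ^ t) A := by
  rw [hA.cfc_eq, IsHermitian.cfc, Unitary.conjStarAlgAut_apply, mpow, dif_pos hA]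
  rfl

lemma ptr_mpow_psd {n : Type*} [Fintype n] [DecidableEq n] (A : Matrix n n ℂ) (hA : A.PosSemidef)
    (t : ℝ) : (mpow A t).PosSemidef := by
  rw [ptr_mpow_cfc A hA.1, ← Matrix.nonneg_iff_posSemidef]
  refine cfc_nonneg fun x hx => ?_
  rw [hA.1.spectrum_real_eq_range_eigenvalues] at hx
  obtain ⟨i, rfl⟩ := hx
  exact Real.rpow_nonneg (hA.eigenvalues_nonneg i) _

lemma ptr_mpow_tendsto {n X : Type*} [Fintype n] [DecidableEq n] {l : Filter X}
    (A : X → Matrix n n ℂ) (A0 : Matrix n n ℂ) (h : Filter.Tendsto A l (nhds A0))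
    (hA : ∀ᶠ x in l, (A x).PosSemidef) (hA0 : A0.PosSemidef) (t : ℝ) (ht : 0 < t) :
    Filter.Tendsto (fun x => mpow (A x) t) l (nhds (mpow A0 t)) := by
  have hsub : ∀ M : Matrix n n ℂ, M.PosSemidef → ‖M‖ ≤ ‖A0‖ + 1 →
      spectrum ℝ M ⊆ Set.Icc 0 ((‖A0‖ + 1) * ‖(1 : Matrix n n ℂ)‖) := by
    intro M hM hn x hx
    refine ⟨?_, ?_⟩
    · rw [hM.1.spectrum_real_eq_range_eigenvalues] at hx
      obtain ⟨i, rfl⟩ := hx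
      exact hM.eigenvalues_nonneg i
    · have := spectrum.norm_le_norm_mul_of_mem hx
      exact (le_abs_self x).trans (this.trans (by gcongr))
  have hnorm : ∀ᶠ x in l, ‖A x‖ ≤ ‖A0‖ + 1 :=
    (h.norm.eventually (gt_mem_nhds (lt_add_one _))).mono fun _ h => h.le
  have := Filter.Tendsto.cfc (p := IsSelfAdjoint) (𝕜 := ℝ)
    (s := Set.Icc 0 ((‖A0‖ + 1) * ‖(1 : Matrix n n ℂ)‖))
    isCompact_Icc (fun x : ℝ => x ^ t) h
    (by filter_upwards [hA, hnorm] with x h1 h2 using hsub _ h1 h2)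
    (by filter_upwards [hA] with x h1 using h1.1)
    (hsub _ hA0 (by linarith)) hA0.1
    (Real.continuous_rpow_const ht.le).continuousOn
  rw [ptr_mpow_cfc A0 hA0.1]
  refine this.congr' ?_
  filter_upwards [hA] with x h1
  rw [ptr_mpow_cfc _ h1.1]

lemma ptr_smul_one_posDef {n : Type*} [Fintype n] [DecidableEq n] (c : ℝ) (hc : 0 < c) :
    ((c : ℂ) • (1 : Matrix n n ℂ)).PosDef :=
  PosDef.one.smul (by exact_mod_cast hc)

lemma ptr_final (n m : ℕ) (p : ℝ) (hp : 1 ≤ p)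
    (Φ : Matrix (Fin m) (Fin m) ℂ →ₗ[ℂ] Matrix (Fin n) (Fin n) ℂ)
    (hΦ1 : Φ 1 = 1)
    (hΦpos : ∀ B : Matrix (Fin m) (Fin m) ℂ, B.PosSemidef → (Φ B).PosSemidef)
    (Ψ : Matrix (Fin n) (Fin n) ℂ →ₗ[ℂ] Matrix (Fin m) (Fin m) ℂ)
    (hΨ : ∀ (A : Matrix (Fin n) (Fin n) ℂ) (B : Matrix (Fin m) (Fin m) ℂ),
      (Ψ A * B).trace = (A * Φ B).trace)
    (σ : Matrix (Fin n) (Fin n) ℂ) (hσ : σ.PosSemidef)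
    (b : Matrix (Fin m) (Fin m) ℂ) (hb : b.PosSemidef) :
    ((mpow (mpow σ (1 / (2 * p)) * Φ b * mpow σ (1 / (2 * p))) p).trace).re
      ≤ ((mpow (mpow (Ψ σ) (1 / (2 * p)) * b * mpow (Ψ σ) (1 / (2 * p))) p).trace).re := by
  have hs : 0 < 1 / (2 * p) := by positivity
  have hp0 : 0 < p := by positivity
  have conj_psd : ∀ {k : ℕ} (M N : Matrix (Fin k) (Fin k) ℂ), M.PosSemidef → N.PosSemidef →
      (mpow M (1 / (2 * p)) * N * mpow M (1 / (2 * p))).PosSemidef := by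
    intro k M N hM hN
    have := hN.conjTranspose_mul_mul_same (mpow M (1 / (2 * p)))
    rwa [(ptr_mpow_psd M hM _).1.eq] at this
  have hω := ptr_adj_pos Φ Ψ hΦpos hΨ σ hσ
  rcases Nat.eq_zero_or_pos n with hn | hn
  · subst hn
    have h0 := (Complex.le_def.1 (ptr_mpow_psd _ (conj_psd _ _ hω hb) p).trace_nonneg).1
    refine le_trans (le_of_eq ?_) h0
    simp [trace]
  have hm : 0 < m := by
    rcases Nat.eq_zero_or_pos m with hm | hm
    · subst hm
      exfalso
      have : (1 : Matrix (Fin 0) (Fin 0) ℂ) = 0 := Subsingleton.elim _ _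
      rw [this, map_zero] at hΦ1
      have h1 := congrFun (congrFun hΦ1 ⟨0, hn⟩) ⟨0, hn⟩
      simp at h1
    · exact hm
  haveI : Nonempty (Fin n) := ⟨⟨0, hn⟩⟩
  haveI : Nonempty (Fin m) := ⟨⟨0, hm⟩⟩
  have hmR : (0 : ℝ) < m := by exact_mod_cast hm
  have hmC : (m : ℂ) ≠ 0 := by exact_mod_cast hm.ne'
  let Φe : ℝ → (Matrix (Fin m) (Fin m) ℂ →ₗ[ℂ] Matrix (Fin n) (Fin n) ℂ) := fun e =>
    ((1 - e : ℝ) : ℂ) • Φ + ((e / m : ℝ) : ℂ) • (traceLinearMap (Fin m) ℂ ℂ).smulRight 1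
  let Ψe : ℝ → (Matrix (Fin n) (Fin n) ℂ →ₗ[ℂ] Matrix (Fin m) (Fin m) ℂ) := fun e =>
    ((1 - e : ℝ) : ℂ) • Ψ + ((e / m : ℝ) : ℂ) • (traceLinearMap (Fin n) ℂ ℂ).smulRight 1
  have hΦe : ∀ e X, Φe e X = ((1 - e : ℝ) : ℂ) • Φ X + ((e / m : ℝ) : ℂ) • (X.trace • 1) :=
    fun e X => rfl
  have hΨe : ∀ e X, Ψe e X = ((1 - e : ℝ) : ℂ) • Ψ X + ((e / m : ℝ) : ℂ) • (X.trace • 1) :=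
    fun e X => rfl
  let σe : ℝ → Matrix (Fin n) (Fin n) ℂ := fun e => σ + (e : ℂ) • 1
  let be : ℝ → Matrix (Fin m) (Fin m) ℂ := fun e => b + (e : ℂ) • 1
  have hσe : ∀ e : ℝ, 0 < e → (σe e).PosDef := fun e he =>
    PosDef.posSemidef_add hσ (ptr_smul_one_posDef e he)
  have hbe : ∀ e : ℝ, 0 < e → (be e).PosDef := fun e he =>
    PosDef.posSemidef_add hb (ptr_smul_one_posDef e he)
  have tr_psd : ∀ {k l : ℕ} (X : Matrix (Fin k) (Fin k) ℂ) (e : ℝ), 0 < e → X.PosSemidef →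
      (((e / m : ℝ) : ℂ) • (X.trace • (1 : Matrix (Fin l) (Fin l) ℂ))).PosSemidef := by
    intro k l X e he hX
    refine (PosSemidef.one.smul hX.trace_nonneg).smul ?_
    have : 0 ≤ e / m := by positivity
    exact_mod_cast this
  have tr_pd : ∀ {k l : ℕ} [Nonempty (Fin k)] (X : Matrix (Fin k) (Fin k) ℂ) (e : ℝ), 0 < e →
      X.PosDef → (((e / m : ℝ) : ℂ) • (X.trace • (1 : Matrix (Fin l) (Fin l) ℂ))).PosDef := by
    intro k l _ X e he hX
    refine (PosDef.one.smul hX.trace_pos).smul ?_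
    have : 0 < e / m := by positivity
    exact_mod_cast this
  have hc : ∀ e : ℝ, e < 1 → (0 : ℂ) ≤ ((1 - e : ℝ) : ℂ) := fun e he => by
    have : 0 ≤ 1 - e := by linarith
    exact_mod_cast this
  have hmain : ∀ e : ℝ, 0 < e → e < 1 →
      ((mpow (mpow (σe e) (1 / (2 * p)) * Φe e (be e) * mpow (σe e) (1 / (2 * p))) p).trace).re
      ≤ ((mpow (mpow (Ψe e (σe e)) (1 / (2 * p)) * be e * mpow (Ψe e (σe e)) (1 / (2 * p))) p).trace).re := by
    intro e he he1
    refine ptr_main (Φe e) (Ψe e) ?_ ?_ ?_ p hp (σe e) (hσe e he) ?_ (be e) (hbe e he) ?_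
    · rw [hΦe, hΦ1, trace_one, Fintype.card_fin, smul_smul, ← add_smul]
      have : ((1 - e : ℝ) : ℂ) + ((e / m : ℝ) : ℂ) * m = 1 := by
        push_cast; field_simp; ring
      rw [this, one_smul]
    · intro B hB
      rw [hΦe]
      exact ((hΦpos B hB).smul (hc e he1)).add (tr_psd _ e he hB)
    · intro A B
      rw [hΦe, hΨe]
      simp only [add_mul, mul_add, trace_add, smul_mul_assoc, mul_smul_comm, trace_smul, hΨ, one_mul,
        mul_one, smul_eq_mul]
      ring
    · rw [hΨe]
      exact PosDef.posSemidef_add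
        ((ptr_adj_pos Φ Ψ hΦpos hΨ _ (hσe e he).posSemidef).smul (hc e he1)) (tr_pd _ e he (hσe e he))
    · rw [hΦe]
      exact PosDef.posSemidef_add
        ((hΦpos _ (hbe e he).posSemidef).smul (hc e he1)) (tr_pd _ e he (hbe e he))
  have cσ : Continuous σe := by
    have : Continuous fun e : ℝ => (e : ℂ) := Complex.continuous_ofReal
    exact continuous_const.add (this.smul continuous_const)
  have cb : Continuous be := by
    have : Continuous fun e : ℝ => (e : ℂ) := Complex.continuous_ofReal
    exact continuous_const.add (this.smul continuous_const)
  have cc1 : Continuous fun e : ℝ => ((1 - e : ℝ) : ℂ) :=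
    Complex.continuous_ofReal.comp (by fun_prop)
  have cc2 : Continuous fun e : ℝ => ((e / m : ℝ) : ℂ) :=
    Complex.continuous_ofReal.comp (by fun_prop)
  have ctr : ∀ k : ℕ, Continuous fun X : Matrix (Fin k) (Fin k) ℂ => X.trace := fun k =>
    (LinearMap.toContinuousLinearMap (Matrix.traceLinearMap (Fin k) ℂ ℂ)).continuous
  have cΦ : Continuous fun e => Φe e (be e) := by
    simp only [hΦe]
    exact (cc1.smul ((LinearMap.toContinuousLinearMap Φ).continuous.comp cb)).add
      (cc2.smul (((ctr m).comp cb).smul continuous_const))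
  have cΨ : Continuous fun e => Ψe e (σe e) := by
    simp only [hΨe]
    exact (cc1.smul ((LinearMap.toContinuousLinearMap Ψ).continuous.comp cσ)).add
      (cc2.smul (((ctr n).comp cσ).smul continuous_const))
  have hev : ∀ᶠ e : ℝ in nhdsWithin 0 (Set.Ioi 0), 0 < e ∧ e < 1 := by
    filter_upwards [Ioo_mem_nhdsGT (zero_lt_one' ℝ)] with e he using he
  have t0 : ∀ {Y : Type} [TopologicalSpace Y] (f : ℝ → Y) (y : Y), Continuous f → f 0 = y →
      Filter.Tendsto f (nhdsWithin 0 (Set.Ioi 0)) (nhds y) := by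
    intro Y _ f y hf hy
    rw [← hy]
    exact hf.continuousAt.tendsto.mono_left nhdsWithin_le_nhds
  have tσ := t0 σe σ cσ (by simp [σe])
  have tb := t0 be b cb (by simp [be])
  have tΦ := t0 (fun e => Φe e (be e)) (Φ b) cΦ (by simp [hΦe, be])
  have tΨ := t0 (fun e => Ψe e (σe e)) (Ψ σ) cΨ (by simp [hΨe, σe])
  have pΦ : ∀ e : ℝ, 0 < e → e < 1 → (Φe e (be e)).PosSemidef := fun e he he1 => by
    rw [hΦe]
    exact ((hΦpos _ (hbe e he).posSemidef).smul (hc e he1)).add (tr_psd _ e he (hbe e he).posSemidef)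
  have pΨ : ∀ e : ℝ, 0 < e → e < 1 → (Ψe e (σe e)).PosSemidef := fun e he he1 => by
    rw [hΨe]
    exact ((ptr_adj_pos Φ Ψ hΦpos hΨ _ (hσe e he).posSemidef).smul (hc e he1)).add
      (tr_psd _ e he (hσe e he).posSemidef)
  have m1 := ptr_mpow_tendsto _ _ tσ (hev.mono fun e he => (hσe e he.1).posSemidef) hσ _ hs
  have m2 := ptr_mpow_tendsto _ _ tΨ (hev.mono fun e he => pΨ e he.1 he.2) hω _ hs
  have m3 := ptr_mpow_tendsto _ _ ((m1.mul tΦ).mul m1)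
    (hev.mono fun e he => conj_psd _ _ (hσe e he.1).posSemidef (pΦ e he.1 he.2))
    (conj_psd _ _ hσ (hΦpos _ hb)) _ hp0
  have m4 := ptr_mpow_tendsto _ _ ((m2.mul tb).mul m2)
    (hev.mono fun e he => conj_psd _ _ (pΨ e he.1 he.2) (hbe e he.1).posSemidef)
    (conj_psd _ _ hω hb) _ hp0
  exact le_of_tendsto_of_tendsto
    ((Complex.continuous_re.comp (ctr n)).continuousAt.tendsto.comp m3)
    ((Complex.continuous_re.comp (ctr m)).continuousAt.tendsto.comp m4)
    (hev.mono fun e he => hmain e he.1 he.2)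
end

/-- Key trace inequality behind the DPI: if `Φ` is unital and positive, `Ψ` is its
trace-adjoint, `σ ≥ 0` and `b ≥ 0` with `supp b ⊆ supp Ψ(σ)`, then for `p ≥ 1`:
`Tr((σ^{1/2p} Φ(b) σ^{1/2p})^p) ≤ Tr((Ψ(σ)^{1/2p} b Ψ(σ)^{1/2p})^p)`. -/
theorem trace_mpow_petz_recovery_ineq (n m : ℕ) (p : ℝ) (hp : 1 ≤ p)
    (Φ : Matrix (Fin m) (Fin m) ℂ →ₗ[ℂ] Matrix (Fin n) (Fin n) ℂ)
    (hΦ1 : Φ 1 = 1)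
    (hΦpos : ∀ B : Matrix (Fin m) (Fin m) ℂ, B.PosSemidef → (Φ B).PosSemidef)
    (Ψ : Matrix (Fin n) (Fin n) ℂ →ₗ[ℂ] Matrix (Fin m) (Fin m) ℂ)
    (hΨ : ∀ (A : Matrix (Fin n) (Fin n) ℂ) (B : Matrix (Fin m) (Fin m) ℂ),
      (Ψ A * B).trace = (A * Φ B).trace)
    (σ : Matrix (Fin n) (Fin n) ℂ) (hσ : σ.PosSemidef)
    (b : Matrix (Fin m) (Fin m) ℂ) (hb : b.PosSemidef)
    (hsupp : ∀ v : Fin m → ℂ, (Ψ σ) *ᵥ v = 0 → b *ᵥ v = 0) :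
    ((mpow (mpow σ (1 / (2 * p)) * Φ b * mpow σ (1 / (2 * p))) p).trace).re
      ≤ ((mpow (mpow (Ψ σ) (1 / (2 * p)) * b * mpow (Ψ σ) (1 / (2 * p))) p).trace).re := by
  exact ptr_final n m p hp Φ hΦ1 hΦpos Ψ hΨ σ hσ b hb
end
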